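/- For every integer m ≥ 2 and every real p > 1 there exists a constant C = C(p,m) > 0, independent of N, such that for every integer N ≥ 1 and every function f : G → ℂ, the spherical maximal function M f(x) = max_{0 ≤ r ≤ N} |(σ_r * f)(x)| satisfies ‖M f‖_{L^p(G)} ≤ C · ‖f‖_{L^p(G)}. -/

import Mathlib

open Finset

noncomputable section

/-- Hamming weight on `(ℤ/(m+1)ℤ)^N`. -/
def hw {m N : ℕ} (y : Fin N → ZMod (m + 1)) : ℕ :=
  (Finset.univ.filter fun i => y i ≠ 0).card

/-- `L¹`-normalized indicator of the sphere of radius `r` (zero if `r < 0` or `r > N`). -/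
def sigmaC (m N : ℕ) (r : ℤ) : (Fin N → ZMod (m + 1)) → ℂ := fun x =>
  if (hw x : ℤ) = r then
    ((Finset.univ.filter fun y : Fin N → ZMod (m + 1) => (hw y : ℤ) = r).card : ℂ)⁻¹
  else 0

/-- Convolution on `(ℤ/(m+1)ℤ)^N`. -/
def convC {m N : ℕ} (g f : (Fin N → ZMod (m + 1)) → ℂ) : (Fin N → ZMod (m + 1)) → ℂ :=
  fun x => ∑ y, g y * f (x - y)

/-- The full spherical maximal function `M f (x) = max_{0 ≤ r ≤ N} |(σ_r * f)(x)|`. -/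
def sphericalMax (m N : ℕ) (f : (Fin N → ZMod (m + 1)) → ℂ) (x : Fin N → ZMod (m + 1)) : ℝ :=
  (Finset.range (N + 1)).sup' Finset.nonempty_range_add_one fun r =>
    ‖convC (sigmaC m N (r : ℤ)) f x‖

/-!
Write `A_r` for averaging over spheres of radius `r`. On the Fourier side `A_r` is multiplication by
a normalized Krawtchouk polynomial, whose differences in `r` decay like those of a geometric
sequence because the alphabet has at least three letters. By Parseval this controls in `L²` a
weighted sum over `r` of the squares of arbitrarily high differences of `r ↦ A_r f x`.

The Cesàro means of the `A_r` are of weak type (1, 1): the powers of `A_1` are mixtures of the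
`A_r` governed by a birth-and-death walk on radii, which drifts outwards and so visits each radius
`k ≤ r` during its first `4 r` steps often enough for Hopf's maximal ergodic inequality to apply.

A discrete Gagliardo–Nirenberg inequality bounds a single `A_r f x` by a Cesàro mean and the
difference energy. Using more and more differences makes the loss of the resulting weak type bound
an arbitrarily small power of the height of `f`, and summing over dyadic heights gives `L^p` for
every `p > 1`.
-/

open fwdDiff

section Krawtchouk

/-- The normalized Krawtchouk coefficient
`[X ^ r] (1 + X) ^ n * (1 + q * X) ^ k / (n + k).choose r`,
defined through its recursion in `k`. The value at `r > n + k` carries no meaning. -/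
def krawtchouk (q : ℝ) (n : ℕ) : ℕ → ℕ → ℝ
  | 0, _ => 1
  | k + 1, r => (1 - r / (n + k + 1)) * krawtchouk q n k r +
      r / (n + k + 1) * q * krawtchouk q n k (r - 1)

variable {q : ℝ} (n k : ℕ)

@[simp]
theorem krawtchouk_zero (q : ℝ) (r : ℕ) : krawtchouk q n 0 r = 1 := rfl

theorem krawtchouk_succ (q : ℝ) (r : ℕ) :
    krawtchouk q n (k + 1) r = (1 - r / (n + k + 1)) * krawtchouk q n k r +
      r / (n + k + 1) * q * krawtchouk q n k (r - 1) := rfl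

@[simp]
theorem krawtchouk_apply_zero (q : ℝ) : krawtchouk q n k 0 = 1 := by
  induction k with
  | zero => rfl
  | succ k ih => simp [krawtchouk_succ, ih]

theorem krawtchouk_succ_sub (q : ℝ) (r : ℕ) :
    krawtchouk q n (k + 1) (r + 1) - krawtchouk q n (k + 1) r =
      -((k + 1) / (n + k + 1)) * (1 - q) * krawtchouk q n k r := by
  induction k generalizing r with
  | zero =>
    simp only [krawtchouk_succ, krawtchouk_zero]
    push_cast
    field_simp
    ring
  | succ k ih =>
    have ih_pred : (r : ℝ) * (krawtchouk q n (k + 1) r - krawtchouk q n (k + 1) (r - 1)) =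
        r * (-((k + 1) / (n + k + 1)) * (1 - q) * krawtchouk q n k (r - 1)) := by
      cases r with
      | zero => simp
      | succ r => rw [Nat.add_sub_cancel, ih]
    rw [krawtchouk_succ n (k + 1), krawtchouk_succ n (k + 1), Nat.add_sub_cancel]
    push_cast
    have hD : (n : ℝ) + k + 1 ≠ 0 := by positivity
    have hD' : (n : ℝ) + (k + 1) + 1 ≠ 0 := by positivity
    linear_combination (norm := skip) (1 - ((r : ℝ) + 1) / (n + (k + 1) + 1)) * ih r +
      q / (n + (k + 1) + 1) * ih_pred +
      (1 - q) * (k + 1) / (n + (k + 1) + 1) * krawtchouk_succ n k q r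
    field_simp
    ring

theorem fwdDiff_krawtchouk (q : ℝ) :
    Δ_[1] (krawtchouk q n k) = (-(k / (n + k)) * (1 - q)) • krawtchouk q n (k - 1) := by
  funext r
  cases k with
  | zero => simp [fwdDiff]
  | succ k => simp [fwdDiff, krawtchouk_succ_sub, add_assoc]

theorem krawtchouk_apply_one (q : ℝ) : krawtchouk q n k 1 = 1 - k / (n + k) * (1 - q) := by
  have h := congrFun (fwdDiff_krawtchouk n k q) 0
  simp only [fwdDiff, Pi.smul_apply, krawtchouk_apply_zero, smul_eq_mul, zero_add] at h
  linarith

theorem krawtchouk_one_mul (q : ℝ) (r : ℕ) (hnk : n + k ≠ 0) :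
    krawtchouk q n k 1 * krawtchouk q n k r =
      (1 - r / (n + k)) * krawtchouk q n k (r + 1) +
        r / (n + k) * (1 + q) * krawtchouk q n k r +
        r / (n + k) * (-q) * krawtchouk q n k (r - 1) := by
  rw [krawtchouk_apply_one]
  cases k with
  | zero =>
    simp only [krawtchouk_zero]
    ring
  | succ k =>
    have diff_pred : (r : ℝ) * (krawtchouk q n (k + 1) r - krawtchouk q n (k + 1) (r - 1)) =
        r * (-((k + 1) / (n + k + 1)) * (1 - q) * krawtchouk q n k (r - 1)) := by
      cases r with
      | zero => simp
      | succ r => rw [Nat.add_sub_cancel, krawtchouk_succ_sub]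
    have hD : (n : ℝ) + k + 1 ≠ 0 := by positivity
    have hD' : (n : ℝ) + (k + 1) ≠ 0 := by positivity
    push_cast
    linear_combination (norm := skip)
      -(1 - (r : ℝ) / (n + (k + 1))) * krawtchouk_succ_sub n k q r -
      q / (n + (k + 1)) * diff_pred - (1 - q) * (k + 1) / (n + k + 1) * krawtchouk_succ n k q r
    field_simp
    ring

theorem one_sub_div_mul_le_one_sub_div_mul {r N : ℕ} {a b : ℝ} (hr : r ≤ N + 1)
    (hab : r ≤ N → a ≤ b) :
    (1 - (r : ℝ) / (N + 1)) * a ≤ (1 - (r : ℝ) / (N + 1)) * b := by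
  obtain rfl | hlt := hr.eq_or_lt
  · have : ((N + 1 : ℕ) : ℝ) / (N + 1) = 1 := by
      push_cast; exact div_self (by positivity)
    rw [this, sub_self, zero_mul, zero_mul]
  · refine mul_le_mul_of_nonneg_left (hab (by lia)) ?_
    rw [sub_nonneg, div_le_one (by positivity)]
    exact_mod_cast hr

theorem abs_krawtchouk_le (q : ℝ) {r : ℕ} (hr : r ≤ n + k) :
    |krawtchouk q n k r| ≤ krawtchouk |q| n k r := by
  induction k generalizing r with
  | zero => simp
  | succ k ih =>
    have hfac : (0 : ℝ) ≤ 1 - r / (n + k + 1) := by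
      rw [sub_nonneg, div_le_one (by positivity)]
      exact_mod_cast hr
    have hlead := one_sub_div_mul_le_one_sub_div_mul (N := n + k) hr ih
    push_cast at hlead
    rw [krawtchouk_succ, krawtchouk_succ]
    refine (abs_add_le _ _).trans (add_le_add ?_ ?_)
    · rwa [abs_mul, abs_of_nonneg hfac]
    · rw [abs_mul, abs_mul, abs_of_nonneg (by positivity : (0 : ℝ) ≤ r / (n + k + 1))]
      gcongr
      exact ih (by lia)

theorem krawtchouk_nonneg (hq : 0 ≤ q) {r : ℕ} (hr : r ≤ n + k) : 0 ≤ krawtchouk q n k r := by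
  simpa [abs_of_nonneg hq] using (abs_nonneg _).trans (abs_krawtchouk_le n k q hr)

theorem mul_krawtchouk_le_krawtchouk_succ (hq : 0 ≤ q) (hq1 : q ≤ 1) {r : ℕ}
    (hr : r + 1 ≤ n + k) : q * krawtchouk q n k r ≤ krawtchouk q n k (r + 1) := by
  induction k generalizing r with
  | zero => simpa using hq1
  | succ k ih =>
    have hlead := one_sub_div_mul_le_one_sub_div_mul (r := r + 1) (N := n + k) hr ih
    have htail : q * ((r : ℝ) / (n + k + 1)) * (q * krawtchouk q n k (r - 1)) ≤
        q * ((r : ℝ) / (n + k + 1)) * krawtchouk q n k r := by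
      cases r with
      | zero => simp
      | succ r => exact mul_le_mul_of_nonneg_left (ih (by lia)) (by positivity)
    rw [krawtchouk_succ, krawtchouk_succ, Nat.add_sub_cancel]
    push_cast at hlead ⊢
    linear_combination (norm := skip) hlead + htail
    field_simp
    ring_nf
    rfl

theorem krawtchouk_succ_le (hq : 0 ≤ q) (hq1 : q ≤ 1) {r : ℕ} (hr : r ≤ n + k) :
    krawtchouk q n (k + 1) r ≤ krawtchouk q n k r := by
  rw [krawtchouk_succ]
  cases r with
  | zero => simp
  | succ r =>
    have hstep := mul_krawtchouk_le_krawtchouk_succ n k hq hq1 hr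
    have : (0 : ℝ) ≤ (r + 1 : ℕ) / (n + k + 1) := by positivity
    rw [Nat.add_sub_cancel]
    nlinarith

theorem krawtchouk_le_exp (hq : 0 ≤ q) (hq1 : q ≤ 1) {r : ℕ} (hr : r ≤ n + k) :
    krawtchouk q n k r ≤ Real.exp (-((1 - q) * (k / (n + k)) * r)) := by
  cases k with
  | zero => simp
  | succ k =>
    set c : ℝ := (1 - q) * ((k + 1 : ℕ) / (n + (k + 1 : ℕ))) with hc
    have : 0 ≤ c := mul_nonneg (by linarith) (by positivity)
    induction r with
    | zero => simp
    | succ r ih =>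
      have hdiff : krawtchouk q n (k + 1) (r + 1) - krawtchouk q n (k + 1) r =
          -(c * krawtchouk q n k r) := by
        rw [krawtchouk_succ_sub, hc]; push_cast; ring
      have hanti : c * krawtchouk q n (k + 1) r ≤ c * krawtchouk q n k r := by
        gcongr; exact krawtchouk_succ_le n k hq hq1 (by lia)
      have hnonneg := krawtchouk_nonneg n (k + 1) hq (r := r) (by lia)
      calc krawtchouk q n (k + 1) (r + 1) ≤ (-c + 1) * krawtchouk q n (k + 1) r := by linarith
        _ ≤ Real.exp (-c) * krawtchouk q n (k + 1) r := by gcongr; exact Real.add_one_le_exp _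
        _ ≤ Real.exp (-c) * Real.exp (-(c * r)) := by gcongr; exact ih (by lia)
        _ = Real.exp (-(c * (r + 1 : ℕ))) := by rw [← Real.exp_add]; push_cast; ring_nf

theorem pred_div_add_le_div_add : ((k - 1 : ℕ) : ℝ) / (n + (k - 1 : ℕ)) ≤ k / (n + k) := by
  cases k with
  | zero => simp
  | succ k =>
    rw [Nat.add_sub_cancel]
    rcases Nat.eq_zero_or_pos (n + k) with h | h
    · obtain ⟨rfl, rfl⟩ : n = 0 ∧ k = 0 := by lia
      simp
    · have : (0 : ℝ) < n + k := by exact_mod_cast h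
      rw [div_le_div_iff₀ this (by positivity)]
      push_cast
      nlinarith [(Nat.cast_nonneg n : (0 : ℝ) ≤ n)]

theorem abs_fwdDiff_iter_krawtchouk_le (hq : q ≤ 1) (M r : ℕ) :
    |Δ_[1] ^[M] (krawtchouk q n k) r| ≤
      ((1 - q) * (k / (n + k))) ^ M * |krawtchouk q n (k - M) r| := by
  induction M generalizing k with
  | zero => simp
  | succ M ih =>
    have hq' : 0 ≤ 1 - q := by linarith
    rw [Function.iterate_succ_apply, fwdDiff_krawtchouk, fwdDiff_iter_const_smul, Pi.smul_apply,
      smul_eq_mul, abs_mul]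
    calc _ ≤ (1 - q) * (k / (n + k)) * (((1 - q) * (k / (n + k))) ^ M *
            |krawtchouk q n (k - 1 - M) r|) := by
          gcongr ?_ * ?_
          · rw [abs_mul, abs_neg, abs_of_nonneg (by positivity), abs_of_nonneg hq', mul_comm]
          · refine (ih (k - 1)).trans ?_
            gcongr ((1 - q) * ?_) ^ M * _
            exact pred_div_add_le_div_add n k
      _ = _ := by rw [Nat.sub_sub, add_comm 1 M]; ring

theorem abs_krawtchouk_sub_le_exp (hq : |q| ≤ 1 / 2) {M r : ℕ} (hr : r ≤ n + (k - M)) :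
    |krawtchouk q n (k - M) r| ≤ Real.exp ((M - k / (n + k) * r) / 2) := by
  have hshift : (k : ℝ) / (n + k) * r ≤ (k - M : ℕ) / (n + (k - M : ℕ)) * r + M := by
    rcases Nat.eq_zero_or_pos (n + (k - M)) with h | h
    · obtain rfl : r = 0 := by lia
      simp
    · have hpos : (0 : ℝ) < n + (k - M : ℕ) := by exact_mod_cast h
      have hr' : (r : ℝ) ≤ n + (k - M : ℕ) := by exact_mod_cast hr
      have hk : (k : ℝ) ≤ (k - M : ℕ) + M := by exact_mod_cast (by lia : k ≤ (k - M) + M)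
      have hk' : ((k - M : ℕ) : ℝ) ≤ k := by exact_mod_cast Nat.sub_le k M
      calc (k : ℝ) / (n + k) * r ≤ ((k - M : ℕ) + M) / (n + (k - M : ℕ)) * r := by gcongr
        _ = (k - M : ℕ) / (n + (k - M : ℕ)) * r + M * (r / (n + (k - M : ℕ))) := by ring
        _ ≤ _ := by
          gcongr
          exact mul_le_of_le_one_right (by positivity) ((div_le_one hpos).2 hr')
  have hnonneg : (0 : ℝ) ≤ (k - M : ℕ) / (n + (k - M : ℕ)) * r := by positivity
  calc |krawtchouk q n (k - M) r| ≤ krawtchouk |q| n (k - M) r := abs_krawtchouk_le _ _ _ hr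
    _ ≤ Real.exp (-((1 - |q|) * ((k - M : ℕ) / (n + (k - M : ℕ))) * r)) :=
      krawtchouk_le_exp _ _ (abs_nonneg q) (by linarith) hr
    _ ≤ _ := Real.exp_le_exp.2 (by nlinarith)

theorem le_four_mul_one_sub_exp {β : ℝ} (hβ : 0 ≤ β) (hβ1 : β ≤ 1) :
    β ≤ 4 * (1 - Real.exp (-(β / 2))) := by
  have hexp : Real.exp (-(β / 2)) * (β / 2 + 1) ≤ 1 := by
    calc _ ≤ Real.exp (-(β / 2)) * Real.exp (β / 2) := by
          gcongr; exact Real.add_one_le_exp _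
      _ = 1 := by rw [← Real.exp_add]; simp
  nlinarith [Real.add_one_le_exp (-(β / 2))]

theorem sum_pow_mul_exp_neg_le (d L : ℕ) {β : ℝ} (hβ : 0 ≤ β) (hβ1 : β ≤ 1) :
    ∑ r ∈ range L, ((r : ℝ) + 1) ^ d * (β ^ (d + 1) * Real.exp (-(β * r))) ≤
      4 * (d.factorial * 2 ^ d * Real.exp (1 / 2)) := by
  set x : ℝ := Real.exp (-(β / 2)) with hx
  have hterm (r : ℕ) : ((r : ℝ) + 1) ^ d * (β ^ (d + 1) * Real.exp (-(β * r))) ≤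
      4 * (d.factorial * 2 ^ d * Real.exp (1 / 2)) * ((1 - x) * x ^ r) := by
    have hpow : (((r : ℝ) + 1) * β) ^ d ≤
        d.factorial * 2 ^ d * (Real.exp (1 / 2) * Real.exp (β * r / 2)) := by
      have h := Real.pow_div_factorial_le_exp ((r + 1) * β / 2) (by positivity) d
      rw [div_le_iff₀ (by positivity), div_pow, div_le_iff₀ (by positivity)] at h
      calc _ ≤ Real.exp ((r + 1) * β / 2) * d.factorial * 2 ^ d := h
        _ ≤ Real.exp (1 / 2 + β * r / 2) * d.factorial * 2 ^ d := by gcongr; linarith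
        _ = _ := by rw [Real.exp_add]; ring
    calc _ = (((r : ℝ) + 1) * β) ^ d * (β * Real.exp (-(β * r))) := by rw [mul_pow]; ring
      _ ≤ d.factorial * 2 ^ d * (Real.exp (1 / 2) * Real.exp (β * r / 2)) *
          (4 * (1 - x) * Real.exp (-(β * r))) := by
        gcongr; exact le_four_mul_one_sub_exp hβ hβ1
      _ = 4 * (d.factorial * 2 ^ d * Real.exp (1 / 2)) *
          ((1 - x) * (Real.exp (β * r / 2) * Real.exp (-(β * r)))) := by ring
      _ = _ := by
        rw [hx, ← Real.exp_nat_mul, ← Real.exp_add]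
        congr 4; ring
  refine (sum_le_sum fun r _ => hterm r).trans ?_
  rw [← mul_sum, ← mul_sum, mul_neg_geom_sum]
  exact mul_le_of_le_one_right (by positivity) (sub_le_self _ (by positivity))

end Krawtchouk

section DiffEnergy

/-- The discrete weighted Sobolev energy of order `P + 1` of a sequence on `{0, …, N}`: only
differences `Δ ^ (P + 1) F s` with `s + P + 1 ≤ N` enter. -/
def diffEnergy {E : Type*} [SeminormedAddCommGroup E] (P N : ℕ) (F : ℕ → E) : ℝ :=
  ∑ s ∈ range (N - P), ((s : ℝ) + 1) ^ (2 * P + 1) * ‖Δ_[1] ^[P + 1] F s‖ ^ 2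

theorem exists_diffEnergy_krawtchouk_le (P : ℕ) : ∃ C : ℝ, 0 < C ∧
    ∀ q : ℝ, |q| ≤ 1 / 2 → ∀ n k : ℕ, diffEnergy P (n + k) (krawtchouk q n k) ≤ C := by
  refine ⟨4 ^ (P + 1) * Real.exp (P + 1) *
    (4 * ((2 * P + 1).factorial * 2 ^ (2 * P + 1) * Real.exp (1 / 2))), by positivity, ?_⟩
  intro q hq n k
  obtain ⟨hq_lower, hq_upper⟩ := abs_le.1 hq
  have hq_pos : 0 ≤ 1 - q := by linarith
  set β : ℝ := k / (n + k)
  have hβ1 : β ≤ 1 := div_le_one_of_le₀ (by simp) (by positivity)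
  have hterm : ∀ r ∈ range (n + k - P), ‖Δ_[1] ^[P + 1] (krawtchouk q n k) r‖ ^ 2 ≤
      4 ^ (P + 1) * Real.exp (P + 1) * (β ^ (2 * P + 1 + 1) * Real.exp (-(β * r))) := by
    intro r hr
    have hr' : r ≤ n + (k - (P + 1)) := by
      have := mem_range.1 hr; lia
    calc _ ≤ ((2 * β) ^ (P + 1) * Real.exp ((P + 1 - β * r) / 2)) ^ 2 := by
          gcongr
          refine (abs_fwdDiff_iter_krawtchouk_le n k (by linarith) _ r).trans ?_
          gcongr
          · linarith
          · simpa using abs_krawtchouk_sub_le_exp n k hq hr'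
      _ = (2 ^ 2) ^ (P + 1) * β ^ (2 * (P + 1)) * Real.exp ((P + 1 - β * r) / 2) ^ 2 := by
          rw [← pow_mul 2 2]; ring
      _ = (2 ^ 2) ^ (P + 1) * β ^ (2 * (P + 1)) * Real.exp (P + 1 + -(β * r)) := by
          rw [← Real.exp_nat_mul]; congr 2; push_cast; ring
      _ = _ := by rw [Real.exp_add]; ring
  calc diffEnergy P (n + k) (krawtchouk q n k)
      ≤ ∑ r ∈ range (n + k - P), ((r : ℝ) + 1) ^ (2 * P + 1) * (4 ^ (P + 1) * Real.exp (P + 1) *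
          (β ^ (2 * P + 1 + 1) * Real.exp (-(β * r)))) :=
        sum_le_sum fun r hr => by gcongr; exact hterm r hr
    _ = 4 ^ (P + 1) * Real.exp (P + 1) * ∑ r ∈ range (n + k - P), ((r : ℝ) + 1) ^ (2 * P + 1) *
          (β ^ (2 * P + 1 + 1) * Real.exp (-(β * r))) := by
        rw [mul_sum]; exact sum_congr rfl fun r _ => by ring
    _ ≤ _ := by
        gcongr
        exact sum_pow_mul_exp_neg_le _ _ (by positivity) hβ1

end DiffEnergy

section Window

theorem fwdDiff_iter_comp_sub {E : Type*} [AddCommGroup E] (F : ℕ → E) {r M t : ℕ}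
    (ht : t + M ≤ r) :
    Δ_[1] ^[M] (fun t => F (r - t)) t = (-1 : ℤ) ^ M • Δ_[1] ^[M] F (r - t - M) := by
  induction M generalizing t with
  | zero => simp
  | succ M ih =>
    rw [Function.iterate_succ_apply', Function.iterate_succ_apply']
    simp only [fwdDiff]
    rw [ih (t := t + 1) (by lia), ih (t := t) (by lia),
      show r - (t + 1) - M = r - t - (M + 1) by lia, show r - t - (M + 1) + 1 = r - t - M by lia,
      pow_succ]
    simp only [mul_neg, mul_one, neg_smul, smul_sub]
    abel

variable {E : Type*} [SeminormedAddCommGroup E]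

theorem norm_fwdDiff_iter_comp_sub (F : ℕ → E) {r M t : ℕ} (ht : t + M ≤ r) :
    ‖Δ_[1] ^[M] (fun t => F (r - t)) t‖ = ‖Δ_[1] ^[M] F (r - t - M)‖ := by
  rw [fwdDiff_iter_comp_sub F ht]
  rcases neg_one_pow_eq_or ℤ M with h | h <;> simp [h]

variable {P L r N : ℕ} {F : ℕ → E}

theorem sum_sq_norm_fwdDiff_iter_le_diffEnergy (hr0 : 0 < r) (hL : 2 * (L + P) ≤ r) (hr : r ≤ N) :
    ∑ s ∈ range L, ‖Δ_[1] ^[P + 1] F (r - s - (P + 1))‖ ^ 2 ≤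
      (2 / r) ^ (2 * P + 1) * diffEnergy P N F := by
  have hweight : ∀ s ∈ range L, ‖Δ_[1] ^[P + 1] F (r - s - (P + 1))‖ ^ 2 ≤
      (2 / r) ^ (2 * P + 1) * ((((r - s - (P + 1) : ℕ) : ℝ) + 1) ^ (2 * P + 1) *
        ‖Δ_[1] ^[P + 1] F (r - s - (P + 1))‖ ^ 2) := by
    intro s hs
    have hge : (1 : ℝ) ≤ 2 / r * ((r - s - (P + 1) : ℕ) + 1) := by
      rw [div_mul_eq_mul_div, one_le_div (by positivity)]
      have := mem_range.1 hs
      exact_mod_cast (by lia : r ≤ 2 * (r - s - (P + 1) + 1))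
    rw [← mul_assoc, ← mul_pow]
    exact le_mul_of_one_le_left (by positivity) (one_le_pow₀ hge)
  have hinj : Set.InjOn (fun s => r - s - (P + 1)) (range L) := by
    intro s hs t ht hst
    simp only [coe_range, Set.mem_Iio] at hs ht hst
    lia
  refine (sum_le_sum hweight).trans ?_
  rw [← mul_sum, diffEnergy, ← sum_image (g := fun s => r - s - (P + 1)) hinj
    (f := fun s : ℕ => ((s : ℝ) + 1) ^ (2 * P + 1) * ‖Δ_[1] ^[P + 1] F s‖ ^ 2)]
  gcongr
  intro s hs
  obtain ⟨t, ht, rfl⟩ := mem_image.1 hs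
  simp only [mem_range] at ht ⊢
  lia

theorem sum_norm_fwdDiff_iter_le {γ : ℝ} (hγ : 0 ≤ γ) (hr0 : 0 < r) (hL : 2 * (L + P) ≤ r)
    (hr : r ≤ N) (hF : diffEnergy P N F ≤ γ ^ 2) :
    ∑ s ∈ range L, ‖Δ_[1] ^[P + 1] F (r - s - (P + 1))‖ ≤ 2 ^ (P + 1) * γ / r ^ P := by
  refine le_of_sq_le_sq ?_ (by positivity)
  calc (∑ s ∈ range L, ‖Δ_[1] ^[P + 1] F (r - s - (P + 1))‖) ^ 2
      ≤ L * ∑ s ∈ range L, ‖Δ_[1] ^[P + 1] F (r - s - (P + 1))‖ ^ 2 := by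
        simpa using sq_sum_le_card_mul_sum_sq (s := range L)
          (f := fun s => ‖Δ_[1] ^[P + 1] F (r - s - (P + 1))‖)
    _ ≤ r * ((2 / r) ^ (2 * P + 1) * γ ^ 2) := by
        gcongr
        · lia
        · exact (sum_sq_norm_fwdDiff_iter_le_diffEnergy hr0 hL hr).trans (by gcongr)
    _ = 2 ^ (2 * P + 1) * γ ^ 2 / (r ^ P) ^ 2 := by
        rw [div_pow, ← pow_mul, mul_comm P 2, pow_succ (r : ℝ)]; field_simp
    _ ≤ 2 ^ (2 * P + 2) * γ ^ 2 / (r ^ P) ^ 2 := by gcongr <;> simp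
    _ = (2 ^ (P + 1) * γ / r ^ P) ^ 2 := by ring

theorem sum_norm_comp_sub_le {α : ℝ} (hL : L ≤ r)
    (hα : ∑ k ∈ range (r + 1), ‖F k‖ ≤ α * (r + 1)) :
    ∑ s ∈ range L, ‖F (r - s)‖ ≤ α * (r + 1) := by
  refine le_trans ?_ hα
  rw [← sum_range_reflect (fun k => ‖F k‖)]
  simp only [Nat.add_sub_cancel]
  gcongr
  lia

end Window

section GagliardoNirenberg

variable {E : Type*} [SeminormedAddCommGroup E] [NormedSpace ℝ E]

/-- The forward moving average of a sequence over blocks of length `h`. -/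
def blockAvg (h : ℕ) (u : ℕ → E) (t : ℕ) : E :=
  (h : ℝ)⁻¹ • ∑ j ∈ range h, u (t + j)

theorem sum_range_sum_range_add_le {g : ℕ → ℝ} (hg : ∀ i, 0 ≤ g i) (t a h : ℕ) :
    ∑ s ∈ range a, ∑ j ∈ range h, g (t + s + j) ≤ h * ∑ s ∈ range (a + h), g (t + s) := by
  have hshift : ∀ j ∈ range h, ∑ s ∈ range a, g (t + s + j) ≤ ∑ s ∈ range (a + h), g (t + s) := by
    intro j hj
    calc ∑ s ∈ range a, g (t + s + j) = ∑ s ∈ Ico j (a + j), g (t + s) := by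
          rw [sum_Ico_eq_sum_range, Nat.add_sub_cancel]
          exact sum_congr rfl fun s _ => congrArg g (by ring)
      _ ≤ _ := by
          refine sum_le_sum_of_subset_of_nonneg (fun s hs => ?_) fun s _ _ => hg _
          simp only [mem_Ico, mem_range] at hs hj ⊢
          lia
  rw [sum_comm]
  simpa using sum_le_sum hshift

theorem norm_blockAvg_le (h : ℕ) (u : ℕ → E) (t : ℕ) :
    ‖blockAvg h u t‖ ≤ (h : ℝ)⁻¹ * ∑ j ∈ range h, ‖u (t + j)‖ := by
  rw [blockAvg, norm_smul, norm_inv, Real.norm_natCast]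
  gcongr
  exact norm_sum_le _ _

theorem sum_norm_blockAvg_le (h : ℕ) (u : ℕ → E) (t a : ℕ) :
    ∑ s ∈ range a, ‖blockAvg h u (t + s)‖ ≤ ∑ s ∈ range (a + h), ‖u (t + s)‖ := by
  calc ∑ s ∈ range a, ‖blockAvg h u (t + s)‖
      ≤ (h : ℝ)⁻¹ * ∑ s ∈ range a, ∑ j ∈ range h, ‖u (t + s + j)‖ := by
        rw [mul_sum]; exact sum_le_sum fun s _ => norm_blockAvg_le h u _
    _ ≤ (h : ℝ)⁻¹ * (h * ∑ s ∈ range (a + h), ‖u (t + s)‖) := by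
        gcongr; exact sum_range_sum_range_add_le (fun _ => norm_nonneg _) t a h
    _ ≤ _ := by
        rw [← mul_assoc]
        exact mul_le_of_le_one_left (by positivity) inv_mul_le_one

theorem norm_sub_blockAvg_le {h : ℕ} (hh : h ≠ 0) (u : ℕ → E) (t : ℕ) :
    ‖u t - blockAvg h u t‖ ≤ ∑ i ∈ range h, ‖Δ_[1] u (t + i)‖ := by
  have htelescope : ∀ j ∈ range h, ‖u t - u (t + j)‖ ≤ ∑ i ∈ range h, ‖Δ_[1] u (t + i)‖ := by
    intro j hj
    have hsum : u (t + j) - u t = ∑ i ∈ range j, Δ_[1] u (t + i) :=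
      (sum_range_sub (fun i => u (t + i)) j).symm
    rw [norm_sub_rev, hsum]
    refine (norm_sum_le _ _).trans ?_
    exact sum_le_sum_of_subset_of_nonneg (range_subset_range.2 (mem_range.1 hj).le)
      fun _ _ _ => norm_nonneg _
  have havg : u t - blockAvg h u t = (h : ℝ)⁻¹ • ∑ j ∈ range h, (u t - u (t + j)) := by
    rw [blockAvg, sum_sub_distrib, sum_const, card_range, smul_sub, ← Nat.cast_smul_eq_nsmul ℝ,
      inv_smul_smul₀ (by exact_mod_cast hh)]
  rw [havg, norm_smul, norm_inv, Real.norm_natCast, inv_mul_le_iff₀ (by positivity)]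
  calc _ ≤ ∑ j ∈ range h, ‖u t - u (t + j)‖ := norm_sum_le _ _
    _ ≤ _ := by simpa using sum_le_sum htelescope

theorem fwdDiff_sub_blockAvg (h : ℕ) (u : ℕ → E) :
    Δ_[1] (u - blockAvg h u) = Δ_[1] u - blockAvg h (Δ_[1] u) := by
  funext t
  simp only [fwdDiff, Pi.sub_apply, blockAvg, sum_sub_distrib, smul_sub, add_right_comm t 1]
  abel

theorem fwdDiff_iter_sub_blockAvg (h M : ℕ) (u : ℕ → E) :
    Δ_[1] ^[M] (u - blockAvg h u) = Δ_[1] ^[M] u - blockAvg h (Δ_[1] ^[M] u) :=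
  (show Function.Commute (Δ_[1]) (fun u : ℕ → E => u - blockAvg h u) from
    fwdDiff_sub_blockAvg h).iterate_left M u

theorem sum_norm_sub_blockAvg_le {h : ℕ} (hh : h ≠ 0) (u : ℕ → E) (t a : ℕ) :
    ∑ s ∈ range a, ‖u (t + s) - blockAvg h u (t + s)‖ ≤
      h * ∑ s ∈ range (a + h), ‖Δ_[1] u (t + s)‖ :=
  (sum_le_sum fun s _ => norm_sub_blockAvg_le hh u (t + s)).trans
    (sum_range_sum_range_add_le (fun _ => norm_nonneg _) t a h)

theorem sum_norm_sub_blockAvg_le_two_mul (h : ℕ) (u : ℕ → E) (t a : ℕ) :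
    ∑ s ∈ range a, ‖u (t + s) - blockAvg h u (t + s)‖ ≤ 2 * ∑ s ∈ range (a + h), ‖u (t + s)‖ := by
  calc _ ≤ ∑ s ∈ range a, ‖u (t + s)‖ + ∑ s ∈ range a, ‖blockAvg h u (t + s)‖ := by
        rw [← sum_add_distrib]; exact sum_le_sum fun s _ => norm_sub_le _ _
    _ ≤ ∑ s ∈ range (a + h), ‖u (t + s)‖ + ∑ s ∈ range (a + h), ‖u (t + s)‖ := by
        gcongr
        · lia
        · exact sum_norm_blockAvg_le h u t a
    _ = _ := (two_mul _).symm

theorem norm_le_sum_norm_add_norm_sub_blockAvg (h : ℕ) (u : ℕ → E) (t : ℕ) :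
    ‖u t‖ ≤ (h : ℝ)⁻¹ * ∑ s ∈ range h, ‖u (t + s)‖ + ‖u t - blockAvg h u t‖ :=
  (norm_le_norm_add_norm_sub' _ _).trans (by gcongr; exact norm_blockAvg_le h u t)

theorem norm_le_sum_norm_add_sum_norm_fwdDiff_iter {h : ℕ} (hh : h ≠ 0) (M : ℕ) (u : ℕ → E)
    (t : ℕ) :
    ‖u t‖ ≤ (2 ^ (M + 1) - 1) / h * ∑ s ∈ range ((M + 1) * h), ‖u (t + s)‖ +
      h ^ M * ∑ s ∈ range ((M + 1) * h), ‖Δ_[1] ^[M + 1] u (t + s)‖ := by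
  induction M generalizing u with
  | zero =>
    refine (norm_le_sum_norm_add_norm_sub_blockAvg h u t).trans ?_
    have htwo_sub_one : (2 ^ (0 + 1) - 1 : ℝ) / h = (h : ℝ)⁻¹ := by norm_num
    rw [htwo_sub_one]
    simpa using norm_sub_blockAvg_le hh u t
  | succ M ih =>
    set v : ℕ → E := u - blockAvg h u with hv
    have hwindow : (M + 1 + 1) * h = (M + 1) * h + h := by ring
    have hlow : ∑ s ∈ range h, ‖u (t + s)‖ ≤ ∑ s ∈ range ((M + 1 + 1) * h), ‖u (t + s)‖ := by
      gcongr; lia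
    have hmid : ∑ s ∈ range ((M + 1) * h), ‖v (t + s)‖ ≤
        2 * ∑ s ∈ range ((M + 1 + 1) * h), ‖u (t + s)‖ := by
      rw [hwindow]; exact sum_norm_sub_blockAvg_le_two_mul h u t _
    have htop : ∑ s ∈ range ((M + 1) * h), ‖Δ_[1] ^[M + 1] v (t + s)‖ ≤
        h * ∑ s ∈ range ((M + 1 + 1) * h), ‖Δ_[1] ^[M + 1 + 1] u (t + s)‖ := by
      rw [hwindow, hv, fwdDiff_iter_sub_blockAvg, Function.iterate_succ_apply' _ (M + 1)]
      exact sum_norm_sub_blockAvg_le hh _ t _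
    have hcoef : (0 : ℝ) ≤ (2 ^ (M + 1) - 1) / h :=
      div_nonneg (sub_nonneg.2 (one_le_pow₀ one_le_two)) (by positivity)
    calc ‖u t‖ ≤ (h : ℝ)⁻¹ * ∑ s ∈ range h, ‖u (t + s)‖ + ‖v t‖ :=
        norm_le_sum_norm_add_norm_sub_blockAvg h u t
      _ ≤ (h : ℝ)⁻¹ * ∑ s ∈ range ((M + 1 + 1) * h), ‖u (t + s)‖ +
          ((2 ^ (M + 1) - 1) / h * (2 * ∑ s ∈ range ((M + 1 + 1) * h), ‖u (t + s)‖) +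
          h ^ M * (h * ∑ s ∈ range ((M + 1 + 1) * h), ‖Δ_[1] ^[M + 1 + 1] u (t + s)‖)) := by
        gcongr
        exact (ih v).trans (by gcongr)
      _ = _ := by field_simp; ring

variable {P r N : ℕ} {F : ℕ → E} {α γ : ℝ}

theorem norm_le_of_window {h : ℕ} (hh : h ≠ 0) (hwindow : h * (4 * (P + 1)) ≤ r) (hr : r ≤ N)
    (hγ : 0 ≤ γ) (hsum : ∑ k ∈ range (r + 1), ‖F k‖ ≤ α * (r + 1))
    (henergy : diffEnergy P N F ≤ γ ^ 2) :
    ‖F r‖ ≤ 2 ^ (P + 1) / h * (α * (r + 1)) + h ^ P * (2 ^ (P + 1) * γ / r ^ P) := by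
  have hL : 2 * ((P + 1) * h + P) ≤ r := by
    have : 1 ≤ h := Nat.one_le_iff_ne_zero.2 hh
    nlinarith
  have hr0 : 0 < r := by
    have := Nat.pos_of_ne_zero hh
    exact lt_of_lt_of_le (by positivity) hwindow
  have hreverse : ∑ s ∈ range ((P + 1) * h), ‖Δ_[1] ^[P + 1] (fun t => F (r - t)) s‖ =
      ∑ s ∈ range ((P + 1) * h), ‖Δ_[1] ^[P + 1] F (r - s - (P + 1))‖ :=
    sum_congr rfl fun s hs => norm_fwdDiff_iter_comp_sub F (by have := mem_range.1 hs; lia)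
  have hGN := norm_le_sum_norm_add_sum_norm_fwdDiff_iter hh P (fun t => F (r - t)) 0
  simp only [zero_add, Nat.sub_zero, hreverse] at hGN
  refine hGN.trans ?_
  gcongr
  · linarith
  · exact sum_norm_comp_sub_le (by lia) hsum
  · exact sum_norm_fwdDiff_iter_le hγ hr0 hL hr henergy

/-- Smoothness in `r` upgrades a bound on the averages of `F` over `{0, …, r}` to a pointwise one;
`ε` is the relative width of the window below `r` on which the two are traded off. -/
theorem norm_le_of_sum_le_of_diffEnergy_le {ε : ℝ} (hε : 0 < ε) (hε1 : ε ≤ 1) (hα : 0 ≤ α)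
    (hγ : 0 ≤ γ) (hr : r ≤ N) (hsum : ∑ k ∈ range (r + 1), ‖F k‖ ≤ α * (r + 1))
    (henergy : diffEnergy P N F ≤ γ ^ 2) :
    ‖F r‖ ≤ 2 ^ (P + 5) * (P + 1) * (α / ε) + 2 ^ (P + 1) * (ε ^ P * γ) := by
  rcases lt_or_ge (ε * r) (4 * (P + 1)) with hsmall | hlarge
  · have hpow : (32 : ℝ) ≤ 2 ^ (P + 5) := by
      rw [pow_add]; linarith [one_le_pow₀ (one_le_two (α := ℝ)) (n := P)]
    have hcount : (r + 1 : ℝ) * ε ≤ 2 ^ (P + 5) * (P + 1) := by nlinarith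
    calc ‖F r‖ ≤ α * (r + 1) :=
          (single_le_sum (fun k _ => norm_nonneg (F k)) (self_mem_range_succ r)).trans hsum
      _ ≤ 2 ^ (P + 5) * (P + 1) * (α / ε) := by
          rw [← mul_div_assoc, le_div_iff₀ hε]; nlinarith
      _ ≤ _ := le_add_of_nonneg_right (by positivity)
  · set h := ⌊ε * r / (4 * (P + 1))⌋₊
    have h_pos : 1 ≤ h := by
      rw [Nat.one_le_floor_iff, le_div_iff₀ (by positivity)]; linarith
    have h_le : (h : ℝ) * (4 * (P + 1)) ≤ ε * r :=
      (le_div_iff₀ (by positivity)).1 (Nat.floor_le (by positivity))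
    have lt_h : ε * r < (h + 1) * (4 * (P + 1)) :=
      (div_lt_iff₀ (by positivity)).1 (Nat.lt_floor_add_one _)
    have hh1 : (1 : ℝ) ≤ h := by exact_mod_cast h_pos
    have hwindow : h * (4 * (P + 1)) ≤ r := by
      have : (h : ℝ) * (4 * (P + 1)) ≤ r := by nlinarith
      exact_mod_cast this
    have hr1 : (1 : ℝ) ≤ r := by
      exact_mod_cast (Nat.mul_pos h_pos (by positivity)).trans_le hwindow
    calc ‖F r‖ ≤ 2 ^ (P + 1) / h * (α * (r + 1)) + h ^ P * (2 ^ (P + 1) * γ / r ^ P) :=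
          norm_le_of_window (by lia) hwindow hr hγ hsum henergy
      _ = 2 ^ (P + 1) * α * ((r + 1) / h) + h ^ P * (2 ^ (P + 1) * γ / r ^ P) := by ring
      _ ≤ 2 ^ (P + 1) * α * (16 * (P + 1) / ε) + (ε * r) ^ P * (2 ^ (P + 1) * γ / r ^ P) := by
          gcongr 2 ^ (P + 1) * α * ?_ + ?_ ^ P * _
          · rw [div_le_div_iff₀ (by positivity) hε]
            nlinarith
          · nlinarith
      _ = _ := by rw [mul_pow]; field_simp; ring

end GagliardoNirenberg

section Fourier

variable {G : Type*} [AddCommGroup G] [Fintype G]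

/-- The Fourier transform on a finite abelian group, indexed by its complex characters and
normalized by counting measure: `f̂ ψ = ∑ x, f x * ψ x`. -/
def fourierSum : (G → ℂ) →ₗ[ℂ] (AddChar G ℂ → ℂ) where
  toFun f ψ := ∑ x, f x * ψ x
  map_add' f g := by ext ψ; simp [add_mul, sum_add_distrib]
  map_smul' c f := by ext ψ; simp [mul_sum, mul_assoc]

theorem fourierSum_apply (f : G → ℂ) (ψ : AddChar G ℂ) : fourierSum f ψ = ∑ x, f x * ψ x := rfl

theorem sum_norm_fourierSum_sq (f : G → ℂ) :
    ∑ ψ, ‖fourierSum f ψ‖ ^ 2 = Fintype.card G * ∑ x, ‖f x‖ ^ 2 := by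
  classical
  suffices h : ∑ ψ, fourierSum f ψ * starRingEnd ℂ (fourierSum f ψ) =
      Fintype.card G * ∑ x, f x * starRingEnd ℂ (f x) by
    simp only [Complex.mul_conj'] at h
    exact_mod_cast h
  calc ∑ ψ, fourierSum f ψ * starRingEnd ℂ (fourierSum f ψ)
      = ∑ ψ : AddChar G ℂ, ∑ x, ∑ y, f x * starRingEnd ℂ (f y) * ψ (x - y) := by
        simp only [fourierSum_apply, map_sum, map_mul, sum_mul_sum, ← AddChar.map_neg_eq_conj,
          sub_eq_add_neg, AddChar.map_add_eq_mul, mul_mul_mul_comm]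
    _ = ∑ x, ∑ y, f x * starRingEnd ℂ (f y) * ∑ ψ : AddChar G ℂ, ψ (x - y) := by
        rw [sum_comm]
        refine sum_congr rfl fun x _ => ?_
        rw [sum_comm]
        simp only [mul_sum]
    _ = Fintype.card G * ∑ x, f x * starRingEnd ℂ (f x) := by
        simp [AddChar.sum_apply_eq_ite, sub_eq_zero, mul_sum, mul_comm]

theorem fourierSum_injective : Function.Injective (fourierSum (G := G)) := by
  rw [injective_iff_map_eq_zero]
  intro f hf
  have hsum : ∑ x, ‖f x‖ ^ 2 = 0 := by simpa [hf] using sum_norm_fourierSum_sq f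
  funext x
  simpa using (sum_eq_zero_iff_of_nonneg fun x _ => by positivity).1 hsum x (mem_univ x)

theorem fourierSum_comp_sub (f : G → ℂ) (y : G) (ψ : AddChar G ℂ) :
    fourierSum (fun x => f (x - y)) ψ = ψ y * fourierSum f ψ := by
  rw [fourierSum_apply, fourierSum_apply, mul_sum, ← Equiv.sum_comp (Equiv.addRight y)]
  refine sum_congr rfl fun x _ => ?_
  simp [AddChar.map_add_eq_mul, mul_comm, mul_left_comm]

end Fourier

section DiffEnergyMap

variable {E F : Type*} [SeminormedAddCommGroup E] [SeminormedAddCommGroup F]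

theorem fwdDiff_iter_map_comp {M G H : Type*} [AddCommMonoid M] [AddCommGroup G] [AddCommGroup H]
    (φ : G →+ H) (h : M) (u : M → G) (n : ℕ) (y : M) :
    Δ_[h] ^[n] (fun z => φ (u z)) y = φ (Δ_[h] ^[n] u y) := by
  simp only [fwdDiff_iter_eq_sum_shift, map_sum, map_zsmul]

theorem diffEnergy_congr {P N : ℕ} {u v : ℕ → E} (huv : ∀ r ≤ N, u r = v r) :
    diffEnergy P N u = diffEnergy P N v := by
  refine sum_congr rfl fun s hs => ?_
  have hs' := mem_range.1 hs
  simp only [fwdDiff_iter_eq_sum_shift]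
  congr 3
  refine sum_congr rfl fun k hk => ?_
  rw [huv _ (by simp only [mem_range, smul_eq_mul, mul_one] at hk ⊢; lia)]

theorem diffEnergy_map_comp {c : ℝ} (φ : E →+ F) (hφ : ∀ e, ‖φ e‖ = c * ‖e‖) (P N : ℕ)
    (u : ℕ → E) : diffEnergy P N (fun r => φ (u r)) = c ^ 2 * diffEnergy P N u := by
  simp only [diffEnergy, fwdDiff_iter_map_comp, hφ, mul_sum]
  exact sum_congr rfl fun s _ => by ring

theorem sum_diffEnergy_fourierSum {G : Type*} [AddCommGroup G] [Fintype G] (P N : ℕ)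
    (u : ℕ → G → ℂ) :
    ∑ ψ, diffEnergy P N (fun r => fourierSum (u r) ψ) =
      Fintype.card G * ∑ x, diffEnergy P N (fun r => u r x) := by
  have hfourier (ψ : AddChar G ℂ) (s : ℕ) : Δ_[1] ^[P + 1] (fun r => fourierSum (u r) ψ) s =
      fourierSum (Δ_[1] ^[P + 1] u s) ψ :=
    fwdDiff_iter_map_comp ((Pi.evalAddMonoidHom _ ψ).comp fourierSum.toAddMonoidHom) 1 u _ s
  have heval (x : G) (s : ℕ) : Δ_[1] ^[P + 1] (fun r => u r x) s = Δ_[1] ^[P + 1] u s x :=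
    fwdDiff_iter_map_comp (Pi.evalAddMonoidHom _ x) 1 u _ s
  simp only [diffEnergy, hfourier, heval]
  rw [sum_comm, sum_comm (s := univ), mul_sum]
  refine sum_congr rfl fun s _ => ?_
  rw [← mul_sum, ← mul_sum, sum_norm_fourierSum_sq]
  ring

end DiffEnergyMap

section HammingSphere

open Polynomial

theorem coeff_one_add_X_pow_mul_one_add_C_mul_X_pow (q : ℝ) (n k r : ℕ) :
    ((1 + X) ^ n * (1 + C q * X) ^ k : ℝ[X]).coeff r = (n + k).choose r * krawtchouk q n k r := by
  induction k generalizing r with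
  | zero => simp [coeff_one_add_X_pow]
  | succ k ih =>
    have hsplit : ((1 + X) ^ n * (1 + C q * X) ^ (k + 1) : ℝ[X]) =
        (1 + X) ^ n * (1 + C q * X) ^ k + C q * (X * ((1 + X) ^ n * (1 + C q * X) ^ k)) := by
      ring
    rw [hsplit, coeff_add, coeff_C_mul]
    cases r with
    | zero => simp [ih]
    | succ r =>
      have hpos : (n : ℝ) + k + 1 ≠ 0 := by positivity
      have habsorb : ((n : ℝ) + k + 1) * (n + k).choose r =
          (n + k + 1).choose (r + 1) * (r + 1) := by
        exact_mod_cast Nat.add_one_mul_choose_eq (n + k) r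
      have hpascal : ((n + k + 1).choose (r + 1) : ℝ) =
          (n + k).choose r + (n + k).choose (r + 1) := by
        exact_mod_cast Nat.choose_succ_succ (n + k) r
      rw [coeff_X_mul, ih, ih, krawtchouk_succ, Nat.add_sub_cancel, ← add_assoc n k 1]
      have hshare : ((n + k + 1).choose (r + 1) : ℝ) * ((r + 1 : ℕ) / (n + k + 1)) =
          (n + k).choose r := by
        push_cast
        field_simp
        linear_combination -habsorb
      linear_combination (krawtchouk q n k (r + 1) - q * krawtchouk q n k r) * hshare -
        krawtchouk q n k (r + 1) * hpascal

section Characters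

variable {ι A : Type*} [Fintype ι] [DecidableEq ι] [AddCommGroup A]

/-- The restriction of a character of `ι → A` to the `i`-th coordinate subgroup. -/
def coordChar (ψ : AddChar (ι → A) ℂ) (i : ι) : AddChar A ℂ :=
  ψ.compAddMonoidHom (AddMonoidHom.single (fun _ => A) i)

open Classical in
/-- The Hamming weight of a character of `ι → A`: the number of coordinates on which it is
nontrivial. -/
def charWeight (ψ : AddChar (ι → A) ℂ) : ℕ := #{i | coordChar ψ i ≠ 0}

theorem charWeight_zero : charWeight (0 : AddChar (ι → A) ℂ) = 0 := by
  simp [charWeight, coordChar, AddChar.ext_iff]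

theorem charWeight_le (ψ : AddChar (ι → A) ℂ) : charWeight ψ ≤ Fintype.card ι :=
  card_le_univ _

theorem card_sub_charWeight_add_charWeight (ψ : AddChar (ι → A) ℂ) :
    Fintype.card ι - charWeight ψ + charWeight ψ = Fintype.card ι :=
  Nat.sub_add_cancel (charWeight_le ψ)

theorem prod_coordChar (ψ : AddChar (ι → A) ℂ) (y : ι → A) : ∏ i, coordChar ψ i (y i) = ψ y := by
  conv_rhs => rw [← univ_sum_single y]
  exact (map_sum ψ.toAddMonoidHom (fun i => Pi.single i (y i)) univ).symm

end Characters

/-- The reciprocal of the number of nonzero elements of `A`; the character of weight `k` has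
spherical multiplier `krawtchouk (-invCardNonzero A)`. -/
def invCardNonzero (A : Type*) [Fintype A] : ℝ := ((Fintype.card A : ℝ) - 1)⁻¹

variable {ι A : Type*} [Fintype ι] [DecidableEq ι] [AddCommGroup A] [Fintype A] [DecidableEq A]

/-- The Hamming sphere of radius `r` about `0` in `ι → A`. -/
def hammingSphere (ι A : Type*) [Fintype ι] [DecidableEq ι] [AddCommGroup A] [Fintype A]
    [DecidableEq A] (r : ℕ) : Finset (ι → A) :=
  univ.filter fun y => hammingNorm y = r

open Classical in
theorem sum_C_addChar_mul_ite [Nontrivial A] (ψ : AddChar A ℂ) :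
    ∑ a, C (ψ a) * (if a ≠ 0 then C (invCardNonzero A : ℂ) * X else 1) =
      if ψ ≠ 0 then 1 + C (-invCardNonzero A : ℂ) * X else 1 + X := by
  set ρ : ℂ := (invCardNonzero A : ℂ) with hρ
  have hcard : (Fintype.card A : ℂ) * ρ = ρ + 1 := by
    have hA : (Fintype.card A : ℂ) - 1 ≠ 0 :=
      sub_ne_zero.2 (by exact_mod_cast (Fintype.one_lt_card (α := A)).ne')
    rw [hρ, invCardNonzero]
    push_cast
    field_simp
    ring
  have hterm (a : A) : C (ψ a) * (if a ≠ 0 then C ρ * X else 1) =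
      C (ψ a) * (C ρ * X) + if a = 0 then 1 - C ρ * X else 0 := by
    by_cases ha : a = 0 <;> simp [ha]
  simp only [hterm, sum_add_distrib, sum_ite_eq', mem_univ, if_true, ← sum_mul, ← map_sum,
    AddChar.sum_eq_ite]
  by_cases hψ : ψ = 0
  · simp only [hψ, ne_eq, not_true, if_true, if_false]
    rw [← mul_assoc, ← C_mul, hcard, C_add, C_1]
    ring
  · simp only [hψ, ↓reduceIte, map_zero, zero_mul, zero_add, ne_eq, not_false_eq_true, map_neg,
      neg_mul]
    ring

theorem sum_C_addChar_mul_C_mul_X_pow_hammingNorm [Nontrivial A] (ψ : AddChar (ι → A) ℂ) :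
    ∑ y, C (ψ y) * (C (invCardNonzero A : ℂ) * X) ^ hammingNorm y =
      (1 + X) ^ (Fintype.card ι - charWeight ψ) *
        (1 + C (-invCardNonzero A : ℂ) * X) ^ charWeight ψ := by
  classical
  have hprod (y : ι → A) : C (ψ y) * (C (invCardNonzero A : ℂ) * X) ^ hammingNorm y =
      ∏ i, C (coordChar ψ i (y i)) * (if y i ≠ 0 then C (invCardNonzero A : ℂ) * X else 1) := by
    rw [prod_mul_distrib, prod_ite, prod_const_one, mul_one, prod_const, ← map_prod,
      prod_coordChar, hammingNorm]
  have htrivial : #{i | ¬coordChar ψ i ≠ 0} = Fintype.card ι - charWeight ψ := by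
    rw [filter_not, ← compl_eq_univ_sdiff, card_compl, charWeight]
  simp only [hprod]
  rw [← Fintype.prod_sum fun i a =>
    C (coordChar ψ i a) * (if a ≠ 0 then C (invCardNonzero A : ℂ) * X else 1)]
  simp only [sum_C_addChar_mul_ite]
  rw [prod_ite, prod_const, prod_const, htrivial, mul_comm, charWeight]

theorem sum_hammingSphere_addChar_mul_pow [Nontrivial A] (ψ : AddChar (ι → A) ℂ) (r : ℕ) :
    (∑ y ∈ hammingSphere ι A r, ψ y) * (invCardNonzero A : ℂ) ^ r =
      (Fintype.card ι).choose r *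
        krawtchouk (-invCardNonzero A) (Fintype.card ι - charWeight ψ) (charWeight ψ) r := by
  have hcoeff := congrArg (coeff · r) (sum_C_addChar_mul_C_mul_X_pow_hammingNorm ψ)
  have hreal : ((1 + X) ^ (Fintype.card ι - charWeight ψ) *
        (1 + C (-invCardNonzero A : ℂ) * X) ^ charWeight ψ : ℂ[X]) =
      ((1 + X) ^ (Fintype.card ι - charWeight ψ) *
        (1 + C (-invCardNonzero A) * X) ^ charWeight ψ : ℝ[X]).map Complex.ofRealHom := by
    simp [Polynomial.map_mul, Polynomial.map_pow]
  simp only [hreal, coeff_map, coeff_one_add_X_pow_mul_one_add_C_mul_X_pow,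
    card_sub_charWeight_add_charWeight, finsetSum_coeff, mul_pow, ← C_pow, coeff_C_mul,
    coeff_X_pow, mul_ite, mul_one, mul_zero, eq_comm (a := r)] at hcoeff
  rw [← sum_filter] at hcoeff
  rw [hammingSphere, sum_mul]
  convert hcoeff using 1
  · exact sum_congr rfl fun y hy => by rw [(mem_filter.1 hy).2]
  · simp

theorem card_hammingSphere_mul_pow [Nontrivial A] (r : ℕ) :
    (#(hammingSphere ι A r) : ℂ) * (invCardNonzero A : ℂ) ^ r = (Fintype.card ι).choose r := by
  simpa [charWeight_zero] using sum_hammingSphere_addChar_mul_pow (0 : AddChar (ι → A) ℂ) r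

theorem hammingSphere_nonempty [Nontrivial A] {r : ℕ} (hr : r ≤ Fintype.card ι) :
    (hammingSphere ι A r).Nonempty := by
  have hcard := card_hammingSphere_mul_pow (ι := ι) (A := A) r
  refine card_ne_zero.1 fun h => ?_
  rw [h, Nat.cast_zero, zero_mul] at hcard
  exact (Nat.choose_pos hr).ne (by exact_mod_cast hcard)

theorem inv_card_mul_sum_hammingSphere_addChar [Nontrivial A] (ψ : AddChar (ι → A) ℂ) {r : ℕ}
    (hr : r ≤ Fintype.card ι) :
    (#(hammingSphere ι A r) : ℂ)⁻¹ * ∑ y ∈ hammingSphere ι A r, ψ y =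
      krawtchouk (-invCardNonzero A) (Fintype.card ι - charWeight ψ) (charWeight ψ) r := by
  have hsum := sum_hammingSphere_addChar_mul_pow ψ r
  have hchoose : ((Fintype.card ι).choose r : ℂ) ≠ 0 := by
    exact_mod_cast (Nat.choose_pos hr).ne'
  rw [← card_hammingSphere_mul_pow (A := A)] at hsum hchoose
  rw [inv_mul_eq_iff_eq_mul₀ (left_ne_zero_of_mul hchoose)]
  refine mul_right_cancel₀ (right_ne_zero_of_mul hchoose) ?_
  rw [hsum]
  ring

end HammingSphere

section SphereAvg

theorem invCardNonzero_nonneg (A : Type*) [Fintype A] [Nonempty A] : 0 ≤ invCardNonzero A := by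
  have : (1 : ℝ) ≤ Fintype.card A := by exact_mod_cast Fintype.card_pos
  exact inv_nonneg.2 (by linarith)

theorem invCardNonzero_le_half {A : Type*} [Fintype A] (hA : 3 ≤ Fintype.card A) :
    invCardNonzero A ≤ 1 / 2 := by
  have : (3 : ℝ) ≤ Fintype.card A := by exact_mod_cast hA
  rw [invCardNonzero, one_div]
  gcongr
  linarith

theorem invCardNonzero_le_one (A : Type*) [Fintype A] [Nontrivial A] : invCardNonzero A ≤ 1 := by
  have : (2 : ℝ) ≤ Fintype.card A := by exact_mod_cast Fintype.one_lt_card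
  exact inv_le_one_of_one_le₀ (by linarith)

variable {ι A E : Type*} [Fintype ι] [DecidableEq ι] [AddCommGroup A] [Fintype A]
  [DecidableEq A]

/-- The operator of averaging over Hamming spheres of radius `r`, i.e. convolution with `σ_r`. It
vanishes for `r > card ι`. -/
def sphereAvg [AddCommGroup E] [Module ℝ E] (r : ℕ) : ((ι → A) → E) →ₗ[ℝ] ((ι → A) → E) :=
  (#(hammingSphere ι A r) : ℝ)⁻¹ • ∑ y ∈ hammingSphere ι A r, LinearMap.funLeft ℝ E (· - y)

theorem sphereAvg_apply [AddCommGroup E] [Module ℝ E] (r : ℕ) (f : (ι → A) → E) (x : ι → A) :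
    sphereAvg r f x =
      (#(hammingSphere ι A r) : ℝ)⁻¹ • ∑ y ∈ hammingSphere ι A r, f (x - y) := by
  simp [sphereAvg, LinearMap.funLeft_apply]

theorem sphereAvg_ofReal (r : ℕ) (f : (ι → A) → ℝ) :
    sphereAvg r (fun z => (f z : ℂ)) = fun x => ((sphereAvg r f x : ℝ) : ℂ) := by
  funext x
  simp [sphereAvg_apply]

theorem norm_sphereAvg_le [SeminormedAddCommGroup E] [NormedSpace ℝ E] (r : ℕ)
    (f : (ι → A) → E) (x : ι → A) :
    ‖sphereAvg r f x‖ ≤ sphereAvg r (fun z => ‖f z‖) x := by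
  rw [sphereAvg_apply, sphereAvg_apply, norm_smul, smul_eq_mul, norm_inv, Real.norm_natCast]
  gcongr
  exact norm_sum_le _ _

theorem sphereAvg_zero [AddCommGroup E] [Module ℝ E] (f : (ι → A) → E) : sphereAvg 0 f = f := by
  have hsphere : hammingSphere ι A 0 = {0} := by
    ext y
    simp [hammingSphere]
  funext x
  simp [sphereAvg_apply, hsphere]

theorem sphereAvg_mono (r : ℕ) : Monotone (sphereAvg (ι := ι) (A := A) (E := ℝ) r) := by
  intro f g hfg x
  simp only [sphereAvg_apply, smul_eq_mul]
  gcongr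
  exact hfg _

theorem sphereAvg_one [Nontrivial A] {r : ℕ} (hr : r ≤ Fintype.card ι) :
    sphereAvg (ι := ι) (A := A) (E := ℝ) r 1 = 1 := by
  have hcard : (#(hammingSphere ι A r) : ℝ) ≠ 0 := by
    exact_mod_cast (hammingSphere_nonempty hr).card_ne_zero
  funext x
  simp [sphereAvg_apply, hcard]

theorem sum_sphereAvg [Nontrivial A] {r : ℕ} (hr : r ≤ Fintype.card ι) (f : (ι → A) → ℝ) :
    ∑ x, sphereAvg r f x = ∑ x, f x := by
  have hcard : (#(hammingSphere ι A r) : ℝ) ≠ 0 := by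
    exact_mod_cast (hammingSphere_nonempty hr).card_ne_zero
  have htranslate (y : ι → A) : ∑ x, f (x - y) = ∑ x, f x :=
    Equiv.sum_comp (Equiv.subRight y) f
  simp only [sphereAvg_apply, smul_eq_mul]
  rw [← mul_sum, sum_comm]
  simp only [htranslate, sum_const, nsmul_eq_mul]
  rw [inv_mul_cancel_left₀ hcard]

theorem fourierSum_sphereAvg [Nontrivial A] (f : (ι → A) → ℂ) (ψ : AddChar (ι → A) ℂ) {r : ℕ}
    (hr : r ≤ Fintype.card ι) :
    fourierSum (sphereAvg r f) ψ =
      krawtchouk (-invCardNonzero A) (Fintype.card ι - charWeight ψ) (charWeight ψ) r *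
        fourierSum f ψ := by
  have havg : sphereAvg r f =
      (#(hammingSphere ι A r) : ℂ)⁻¹ • ∑ y ∈ hammingSphere ι A r, fun x => f (x - y) := by
    funext x
    simp [sphereAvg_apply]
  rw [havg, map_smul, map_sum, Pi.smul_apply, Finset.sum_apply, smul_eq_mul,
    ← inv_card_mul_sum_hammingSphere_addChar ψ hr, mul_assoc, sum_mul]
  simp only [fourierSum_comp_sub]

theorem sphereAvg_one_sphereAvg_complex [Nonempty ι] [Nontrivial A] {r : ℕ}
    (hr : r ≤ Fintype.card ι) (f : (ι → A) → ℂ) :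
    sphereAvg 1 (sphereAvg r f) =
      (1 - (r : ℝ) / Fintype.card ι) • sphereAvg (r + 1) f +
        ((r : ℝ) / Fintype.card ι * (1 - invCardNonzero A)) • sphereAvg r f +
        ((r : ℝ) / Fintype.card ι * invCardNonzero A) • sphereAvg (r - 1) f := by
  refine fourierSum_injective (funext fun ψ => ?_)
  have hcard := card_sub_charWeight_add_charWeight ψ
  have hthree := krawtchouk_one_mul (Fintype.card ι - charWeight ψ) (charWeight ψ)
    (-invCardNonzero A) r (by rw [hcard]; exact Fintype.card_ne_zero)
  rw [← Nat.cast_add, hcard, ← Complex.ofReal_inj] at hthree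
  have htop : ((1 - (r : ℝ) / Fintype.card ι : ℝ) : ℂ) * fourierSum (sphereAvg (r + 1) f) ψ =
      ((1 - (r : ℝ) / Fintype.card ι : ℝ) : ℂ) * (krawtchouk (-invCardNonzero A)
        (Fintype.card ι - charWeight ψ) (charWeight ψ) (r + 1) * fourierSum f ψ) := by
    obtain rfl | hlt := hr.eq_or_lt
    · simp
    · rw [fourierSum_sphereAvg f ψ hlt]
  simp only [map_add, LinearMap.map_smul_of_tower, Pi.add_apply, Pi.smul_apply, Complex.real_smul,
    htop, fourierSum_sphereAvg _ ψ hr, fourierSum_sphereAvg f ψ (r.sub_le 1 |>.trans hr),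
    fourierSum_sphereAvg _ ψ (Nat.one_le_iff_ne_zero.2 Fintype.card_ne_zero)]
  push_cast at hthree ⊢
  linear_combination fourierSum f ψ * hthree

theorem sphereAvg_one_sphereAvg [Nonempty ι] [Nontrivial A] {r : ℕ} (hr : r ≤ Fintype.card ι)
    (f : (ι → A) → ℝ) :
    sphereAvg 1 (sphereAvg r f) =
      (1 - (r : ℝ) / Fintype.card ι) • sphereAvg (r + 1) f +
        ((r : ℝ) / Fintype.card ι * (1 - invCardNonzero A)) • sphereAvg r f +
        ((r : ℝ) / Fintype.card ι * invCardNonzero A) • sphereAvg (r - 1) f := by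
  funext x
  have h := congrFun (sphereAvg_one_sphereAvg_complex hr fun z => (f z : ℂ)) x
  simp only [sphereAvg_ofReal, Pi.add_apply, Pi.smul_apply, Complex.real_smul] at h
  exact_mod_cast h

universe u v

theorem exists_sum_diffEnergy_sphereAvg_le (P : ℕ) : ∃ C : ℝ, 0 < C ∧
    ∀ (ι : Type u) (A : Type v) [Fintype ι] [DecidableEq ι] [AddCommGroup A] [Fintype A]
      [DecidableEq A], 3 ≤ Fintype.card A → ∀ f : (ι → A) → ℂ,
      ∑ x, diffEnergy P (Fintype.card ι) (fun r => sphereAvg r f x) ≤ C * ∑ x, ‖f x‖ ^ 2 := by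
  obtain ⟨C, hC, henergy⟩ := exists_diffEnergy_krawtchouk_le P
  refine ⟨C, hC, fun ι A _ _ _ _ _ hA f => ?_⟩
  have : Nontrivial A := Fintype.one_lt_card_iff_nontrivial.1 (by lia)
  have hq : |-invCardNonzero A| ≤ 1 / 2 := by
    rw [abs_neg, abs_of_nonneg (invCardNonzero_nonneg A)]
    exact invCardNonzero_le_half hA
  have hmultiplier (ψ : AddChar (ι → A) ℂ) :
      diffEnergy P (Fintype.card ι) (fun r => fourierSum (sphereAvg r f) ψ) ≤
        C * ‖fourierSum f ψ‖ ^ 2 := by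
    let φ : ℝ →+ ℂ := (AddMonoidHom.mulRight (fourierSum f ψ)).comp Complex.ofRealHom.toAddMonoidHom
    have hφ (t : ℝ) : ‖φ t‖ = ‖fourierSum f ψ‖ * ‖t‖ := by simp [φ, mul_comm]
    rw [diffEnergy_congr fun r hr => fourierSum_sphereAvg f ψ hr]
    calc _ = ‖fourierSum f ψ‖ ^ 2 * diffEnergy P (Fintype.card ι)
          (krawtchouk (-invCardNonzero A) (Fintype.card ι - charWeight ψ) (charWeight ψ)) :=
        diffEnergy_map_comp φ hφ P _ _
      _ ≤ ‖fourierSum f ψ‖ ^ 2 * C := by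
        gcongr
        simpa only [card_sub_charWeight_add_charWeight] using
          henergy _ hq (Fintype.card ι - charWeight ψ) (charWeight ψ)
      _ = C * ‖fourierSum f ψ‖ ^ 2 := mul_comm _ _
  refine le_of_mul_le_mul_left ?_ (by positivity : (0 : ℝ) < Fintype.card (ι → A))
  rw [← sum_diffEnergy_fourierSum, mul_left_comm, ← sum_norm_fourierSum_sq, mul_sum]
  exact sum_le_sum fun ψ _ => hmultiplier ψ

theorem exists_sum_diffEnergy_sphereAvg_real_le (P : ℕ) : ∃ C : ℝ, 0 < C ∧
    ∀ (ι : Type u) (A : Type v) [Fintype ι] [DecidableEq ι] [AddCommGroup A] [Fintype A]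
      [DecidableEq A], 3 ≤ Fintype.card A → ∀ f : (ι → A) → ℝ,
      ∑ x, diffEnergy P (Fintype.card ι) (fun r => sphereAvg r f x) ≤ C * ∑ x, f x ^ 2 := by
  obtain ⟨C, hC, henergy⟩ := exists_sum_diffEnergy_sphereAvg_le P
  refine ⟨C, hC, fun ι A _ _ _ _ _ hA f => ?_⟩
  have hofReal (x : ι → A) : diffEnergy P (Fintype.card ι)
        (fun r => sphereAvg r (fun z => (f z : ℂ)) x) =
      diffEnergy P (Fintype.card ι) (fun r => sphereAvg r f x) := by
    simp only [sphereAvg_ofReal]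
    simpa using diffEnergy_map_comp (c := 1) Complex.ofRealHom.toAddMonoidHom (by simp) P
      (Fintype.card ι) fun r => sphereAvg r f x
  simpa [hofReal] using henergy ι A hA fun z => (f z : ℂ)

end SphereAvg

section MaximalErgodic

variable {α : Type*} {K : (α → ℝ) →ₗ[ℝ] (α → ℝ)} {g : α → ℝ}

/-- The Hopf maximal functions of `g` under `K`: `hopfMax K g n` dominates the ergodic sums
`∑ i < k, K ^ i g` with `k ≤ n`. -/
def hopfMax (K : (α → ℝ) →ₗ[ℝ] (α → ℝ)) (g : α → ℝ) : ℕ → α → ℝ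
  | 0 => 0
  | n + 1 => 0 ⊔ (g + K (hopfMax K g n))

theorem hopfMax_nonneg (n : ℕ) : 0 ≤ hopfMax K g n := by
  cases n with
  | zero => exact le_rfl
  | succ n => exact le_sup_left

theorem hopfMax_le_succ (hK : Monotone K) (n : ℕ) : hopfMax K g n ≤ hopfMax K g (n + 1) := by
  induction n with
  | zero => exact hopfMax_nonneg 1
  | succ n ih => exact sup_le_sup_left (add_le_add_right (hK ih) g) 0

theorem ergodicSum_le_hopfMax (hK : Monotone K) (n : ℕ) :
    ∑ i ∈ range n, (K ^ i) g ≤ hopfMax K g n := by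
  induction n with
  | zero => exact le_rfl
  | succ n ih =>
    calc ∑ i ∈ range (n + 1), (K ^ i) g = g + K (∑ i ∈ range n, (K ^ i) g) := by
          rw [sum_range_succ', map_sum, add_comm]
          simp only [pow_succ', Module.End.mul_apply, pow_zero, Module.End.one_apply]
      _ ≤ g + K (hopfMax K g n) := add_le_add_right (hK ih) g
      _ ≤ hopfMax K g (n + 1) := le_sup_right

theorem hopfMax_le_add_of_pos (hK : Monotone K) {n : ℕ} {x : α} (hx : 0 < hopfMax K g n x) :
    hopfMax K g n x ≤ g x + K (hopfMax K g n) x := by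
  cases n with
  | zero => exact absurd hx (lt_irrefl 0)
  | succ n =>
    have hmax : hopfMax K g (n + 1) x = 0 ⊔ (g x + K (hopfMax K g n) x) := rfl
    rw [hmax, lt_sup_iff] at hx
    rw [hmax, sup_eq_right.2 (hx.resolve_left (lt_irrefl 0)).le]
    gcongr
    exact hK (hopfMax_le_succ hK n) x

theorem sum_hopfMax_pos_nonneg [Fintype α] (hK : Monotone K) (hsum : ∀ u, ∑ x, K u x = ∑ x, u x)
    (n : ℕ) : 0 ≤ ∑ x with 0 < hopfMax K g n x, g x := by
  set M := hopfMax K g n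
  have hM0 : 0 ≤ M := hopfMax_nonneg n
  have hKM : 0 ≤ K M := by simpa using hK hM0
  have hsupport : ∑ x with 0 < M x, M x = ∑ x, M x :=
    sum_filter_of_ne fun x _ hx => lt_of_le_of_ne (hM0 x) hx.symm
  calc 0 ≤ ∑ x, M x - ∑ x with 0 < M x, K M x := by
        rw [sub_nonneg, ← hsum M]
        exact sum_le_sum_of_subset_of_nonneg (filter_subset _ _) fun x _ _ => hKM x
    _ = ∑ x with 0 < M x, (M x - K M x) := by rw [sum_sub_distrib, hsupport]
    _ ≤ ∑ x with 0 < M x, g x := sum_le_sum fun x hx =>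
        sub_le_iff_le_add.2 (hopfMax_le_add_of_pos hK (mem_filter.1 hx).2)

theorem mul_card_lt_ergodicSum_le [Fintype α] (hK : Monotone K)
    (hsum : ∀ u, ∑ x, K u x = ∑ x, u x) (hone : K 1 = 1) {f : α → ℝ} (hf : 0 ≤ f) {c : ℝ}
    (hc : 0 ≤ c) (L : ℕ) :
    c * #{x | ∃ n ≤ L, c * n < ∑ i ∈ range n, (K ^ i) f x} ≤ ∑ x, f x := by
  have hpow (i : ℕ) : (K ^ i) 1 = 1 := by
    induction i with
    | zero => rfl
    | succ i ih => rw [pow_succ', Module.End.mul_apply, ih, hone]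
  have hmono : Monotone (hopfMax K (f - c • 1)) := monotone_nat_of_le_succ (hopfMax_le_succ hK)
  have hsub : univ.filter (fun x => ∃ n ≤ L, c * n < ∑ i ∈ range n, (K ^ i) f x) ⊆
      univ.filter fun x => 0 < hopfMax K (f - c • 1) L x := by
    refine monotone_filter_right _ fun x _ ⟨n, hn, hlt⟩ => ?_
    refine lt_of_lt_of_le ?_ ((ergodicSum_le_hopfMax hK n).trans (hmono hn) x)
    simp only [map_sub, map_smul, hpow, Finset.sum_apply, Pi.sub_apply, Pi.smul_apply, Pi.one_apply,
      sum_sub_distrib, sum_const, card_range, nsmul_eq_mul, smul_eq_mul]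
    linarith
  have hhopf := sum_hopfMax_pos_nonneg (g := f - c • 1) hK hsum L
  simp only [Pi.sub_apply, Pi.smul_apply, Pi.one_apply, smul_eq_mul, mul_one, sum_sub_distrib,
    sum_const, nsmul_eq_mul, sub_nonneg] at hhopf
  calc c * (#{x | ∃ n ≤ L, c * n < ∑ i ∈ range n, (K ^ i) f x} : ℝ)
      ≤ #{x | 0 < hopfMax K (f - c • 1) L x} * c := by rw [mul_comm]; gcongr
    _ ≤ ∑ x with 0 < hopfMax K (f - c • 1) L x, f x := hhopf
    _ ≤ ∑ x, f x := sum_le_sum_of_subset_of_nonneg (filter_subset _ _) fun x _ _ => hf x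

end MaximalErgodic

section RadialWalk

/-- The transition operator of the walk on radii induced by convolution with `σ_1`. Its rates are
constant beyond radius `N`, so that it is a Markov operator on all of `ℕ`. -/
def radialWalk (N : ℕ) (ρ : ℝ) : (ℕ → ℝ) →ₗ[ℝ] (ℕ → ℝ) where
  toFun u r := (1 - (min r N : ℕ) / N) * u (r + 1) +
    (min r N : ℕ) / N * (1 - ρ) * u r + (min r N : ℕ) / N * ρ * u (r - 1)
  map_add' u v := by funext r; simp only [Pi.add_apply]; ring
  map_smul' c u := by funext r; simp only [Pi.smul_apply, smul_eq_mul, RingHom.id_apply]; ring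

theorem radialWalk_apply {N r : ℕ} (ρ : ℝ) (u : ℕ → ℝ) (hr : r ≤ N) :
    radialWalk N ρ u r =
      (1 - r / N) * u (r + 1) + r / N * (1 - ρ) * u r + r / N * ρ * u (r - 1) := by
  simp only [radialWalk, LinearMap.coe_mk, AddHom.coe_mk, min_eq_left hr]

variable {N : ℕ} {ρ : ℝ}

theorem radialWalk_pow_one (i : ℕ) : (radialWalk N ρ ^ i) 1 = 1 := by
  induction i with
  | zero => rfl
  | succ i ih =>
    rw [pow_succ', Module.End.mul_apply, ih]
    funext r
    simp only [radialWalk, LinearMap.coe_mk, AddHom.coe_mk, Pi.one_apply]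
    ring

variable (hρ : 0 ≤ ρ) (hρ1 : ρ ≤ 1)
include hρ hρ1

theorem radialWalk_le_radialWalk {u v : ℕ → ℝ} {r : ℕ} (huv : ∀ s ≤ r + 1, u s ≤ v s) :
    radialWalk N ρ u r ≤ radialWalk N ρ v r := by
  have ha : ((min r N : ℕ) : ℝ) / N ≤ 1 :=
    div_le_one_of_le₀ (by exact_mod_cast min_le_right r N) (by positivity)
  have hnext := huv (r + 1) le_rfl
  have hstay := huv r (by lia)
  have hprev := huv (r - 1) (by lia)
  have : 0 ≤ 1 - ρ := by linarith
  have : 0 ≤ 1 - ((min r N : ℕ) : ℝ) / N := by linarith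
  simp only [radialWalk, LinearMap.coe_mk, AddHom.coe_mk]
  gcongr

theorem radialWalk_pow_le_radialWalk_pow {u v : ℕ → ℝ} {i j : ℕ}
    (huv : ∀ s ≤ j + i, u s ≤ v s) : (radialWalk N ρ ^ i) u j ≤ (radialWalk N ρ ^ i) v j := by
  induction i generalizing j with
  | zero => exact huv j le_rfl
  | succ i ih =>
    rw [pow_succ', Module.End.mul_apply, Module.End.mul_apply]
    exact radialWalk_le_radialWalk hρ hρ1 fun s hs => ih fun t ht => huv t (by lia)

theorem add_half_le_radialWalk_pow {n j : ℕ} (hjn : 4 * (j + n) ≤ N) :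
    (j : ℝ) + n / 2 ≤ (radialWalk N ρ ^ n) (fun s => (s : ℝ)) j := by
  induction n generalizing j with
  | zero => simp
  | succ n ih =>
    rw [pow_succ', Module.End.mul_apply]
    have hN : (0 : ℝ) < N := by exact_mod_cast (by lia : 0 < N)
    have hrate : (j : ℝ) / N ≤ 1 / 4 := by
      rw [div_le_iff₀ hN]
      have : 4 * (j : ℝ) ≤ N := by exact_mod_cast (by lia : 4 * j ≤ N)
      linarith
    have : 0 ≤ (j : ℝ) / N := by positivity
    have hrate_down : (j : ℝ) / N * ρ ≤ 1 / 4 := by nlinarith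
    have hpred : (j : ℝ) - 1 ≤ (j - 1 : ℕ) := by
      rw [sub_le_iff_le_add]; exact_mod_cast Nat.le_add_of_sub_le le_rfl
    calc (j : ℝ) + (n + 1 : ℕ) / 2
        ≤ (1 - j / N) * (j + 1 + n / 2) + j / N * (1 - ρ) * (j + n / 2) +
            j / N * ρ * (j - 1 + n / 2) := by push_cast; linarith
      _ ≤ radialWalk N ρ (fun s => (s : ℝ) + n / 2) j := by
          rw [radialWalk_apply ρ _ (by lia : j ≤ N)]
          push_cast
          gcongr
      _ ≤ radialWalk N ρ ((radialWalk N ρ ^ n) fun s => (s : ℝ)) j :=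
          radialWalk_le_radialWalk hρ hρ1 fun s hs => ih (by lia)

theorem radialWalk_indicator_Ioi_le (k : ℕ) :
    radialWalk N ρ ((Set.Ioi k).indicator 1) ≤ (Set.Ioi k).indicator 1 + Pi.single k 1 := by
  intro j
  rcases lt_or_ge j k with hjk | hkj
  · refine (radialWalk_le_radialWalk (v := 0) hρ hρ1 fun s hs => ?_).trans ?_
    · simp [Set.indicator, (by lia : ¬k < s)]
    · simp [Set.indicator, hjk.not_gt, hjk.ne]
  · refine (radialWalk_le_radialWalk (v := 1) hρ hρ1 fun s _ => ?_).trans ?_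
    · exact Set.indicator_le_self' (fun _ _ => zero_le_one) s
    · rw [show radialWalk N ρ 1 = 1 from radialWalk_pow_one 1]
      obtain rfl | hlt := hkj.eq_or_lt
      · simp
      · simp [Set.indicator, hlt, hlt.ne']

theorem radialWalk_pow_indicator_Ioi_le (k n : ℕ) :
    (radialWalk N ρ ^ n) ((Set.Ioi k).indicator 1) 0 ≤
      ∑ i ∈ range n, (radialWalk N ρ ^ i) (Pi.single k 1) 0 := by
  induction n with
  | zero => simp
  | succ n ih =>
    have hflux := radialWalk_pow_le_radialWalk_pow (N := N) (i := n) (j := 0) hρ hρ1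
      fun s _ => radialWalk_indicator_Ioi_le (N := N) hρ hρ1 k s
    rw [map_add, Pi.add_apply] at hflux
    rw [pow_succ, Module.End.mul_apply, sum_range_succ]
    linarith

theorem quarter_le_radialWalk_pow_indicator_Ioi {k r : ℕ} (hkr : k ≤ r) (hr : 1 ≤ r)
    (hrN : 16 * r ≤ N) :
    1 / 4 ≤ (radialWalk N ρ ^ (4 * r)) ((Set.Ioi k).indicator 1) 0 := by
  have hdrift := add_half_le_radialWalk_pow (N := N) (n := 4 * r) (j := 0) hρ hρ1 (by lia)
  have hbound : (radialWalk N ρ ^ (4 * r)) (fun s => (s : ℝ)) 0 ≤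
      (radialWalk N ρ ^ (4 * r)) ((k : ℝ) • 1 + (4 * r : ℝ) • (Set.Ioi k).indicator 1) 0 := by
    refine radialWalk_pow_le_radialWalk_pow hρ hρ1 fun s hs => ?_
    rcases le_or_gt s k with hsk | hks
    · simpa [Set.indicator, hsk.not_gt] using hsk
    · have : (s : ℝ) ≤ 4 * r := by exact_mod_cast (by lia : s ≤ 4 * r)
      simp only [Pi.add_apply, Pi.smul_apply, Pi.one_apply, Set.indicator, Set.mem_Ioi, hks,
        if_true, smul_eq_mul, mul_one]
      linarith [k.cast_nonneg (α := ℝ)]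
  rw [map_add, map_smul, map_smul, radialWalk_pow_one] at hbound
  simp only [Pi.add_apply, Pi.smul_apply, Pi.one_apply, smul_eq_mul, mul_one] at hbound
  push_cast at hdrift
  have hkr' : (k : ℝ) ≤ r := by exact_mod_cast hkr
  have hr' : (0 : ℝ) < r := by exact_mod_cast hr
  refine le_of_mul_le_mul_left ?_ hr'
  linarith

theorem sum_range_le_sum_radialWalk_pow {r : ℕ} (hr : 1 ≤ r) (hrN : 16 * r ≤ N) {F : ℕ → ℝ}
    (hF : 0 ≤ F) :
    ∑ k ∈ range (r + 1), F k ≤ 4 * ∑ i ∈ range (4 * r), (radialWalk N ρ ^ i) F 0 := by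
  have hsingle (i : ℕ) : ∑ k ∈ range (r + 1), F k * (radialWalk N ρ ^ i) (Pi.single k 1) 0 ≤
      (radialWalk N ρ ^ i) F 0 := by
    have hle : ∑ k ∈ range (r + 1), F k • Pi.single k 1 ≤ F := by
      intro s
      simp only [Finset.sum_apply, Pi.smul_apply, Pi.single_apply, smul_eq_mul, mul_ite, mul_one,
        mul_zero, sum_ite_eq]
      split_ifs
      · exact le_rfl
      · exact hF s
    have := radialWalk_pow_le_radialWalk_pow (N := N) (i := i) (j := 0) hρ hρ1 fun s _ => hle s
    simpa [map_sum, Finset.sum_apply, map_smul] using this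
  have hvisit : ∀ k ∈ range (r + 1),
      1 / 4 ≤ ∑ i ∈ range (4 * r), (radialWalk N ρ ^ i) (Pi.single k 1) 0 := fun k hk =>
    (quarter_le_radialWalk_pow_indicator_Ioi hρ hρ1 (mem_range_succ_iff.1 hk) hr hrN).trans
      (radialWalk_pow_indicator_Ioi_le hρ hρ1 k _)
  calc ∑ k ∈ range (r + 1), F k = 4 * ∑ k ∈ range (r + 1), F k * (1 / 4) := by
        rw [← sum_mul]; ring
    _ ≤ 4 * ∑ k ∈ range (r + 1), F k *
          ∑ i ∈ range (4 * r), (radialWalk N ρ ^ i) (Pi.single k 1) 0 := by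
        gcongr with k hk
        · exact hF k
        · exact hvisit k hk
    _ = 4 * ∑ i ∈ range (4 * r), ∑ k ∈ range (r + 1),
          F k * (radialWalk N ρ ^ i) (Pi.single k 1) 0 := by
        simp only [mul_sum]
        rw [sum_comm]
    _ ≤ 4 * ∑ i ∈ range (4 * r), (radialWalk N ρ ^ i) F 0 := by
        gcongr with i
        exact hsingle i

end RadialWalk

section WeakType

theorem mul_card_lt_le_sum {α : Type*} [Fintype α] {g : α → ℝ} (hg : 0 ≤ g) (c : ℝ) :
    c * #{x | c < g x} ≤ ∑ x, g x := by
  calc c * #{x | c < g x} = #{x | c < g x} • c := by rw [nsmul_eq_mul, mul_comm]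
    _ ≤ ∑ x with c < g x, g x := card_nsmul_le_sum _ _ _ fun x hx => (mem_filter.1 hx).2.le
    _ ≤ ∑ x, g x := sum_le_univ_sum_of_nonneg hg

variable {ι A : Type*} [Fintype ι] [DecidableEq ι] [AddCommGroup A] [Fintype A] [DecidableEq A]

theorem sphereAvg_nonneg {f : (ι → A) → ℝ} (hf : 0 ≤ f) (r : ℕ) : 0 ≤ sphereAvg r f := by
  simpa only [map_zero] using sphereAvg_mono r hf

theorem sphereAvg_one_pow_sphereAvg [Nonempty ι] [Nontrivial A] (f : (ι → A) → ℝ) (x : ι → A)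
    (i : ℕ) {r : ℕ} (hr : r ≤ Fintype.card ι) :
    (sphereAvg 1 ^ i) (sphereAvg r f) x =
      (radialWalk (Fintype.card ι) (invCardNonzero A) ^ i) (fun r => sphereAvg r f x) r := by
  induction i generalizing r with
  | zero => rfl
  | succ i ih =>
    rw [pow_succ, Module.End.mul_apply, pow_succ', Module.End.mul_apply, radialWalk_apply _ _ hr,
      sphereAvg_one_sphereAvg hr]
    simp only [map_add, map_smul, Pi.add_apply, Pi.smul_apply, smul_eq_mul]
    rw [ih hr, ih ((r.sub_le 1).trans hr)]
    rcases hr.lt_or_eq with hlt | rfl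
    · rw [ih hlt]
    · rw [div_self (Nat.cast_ne_zero.2 Fintype.card_ne_zero), sub_self, zero_mul, zero_mul]

theorem mul_card_lt_sum_range_card_sphereAvg_le [Nontrivial A] {f : (ι → A) → ℝ} (hf : 0 ≤ f)
    (c : ℝ) :
    c * #{x | c * (Fintype.card ι + 1) < ∑ k ∈ range (Fintype.card ι + 1), sphereAvg k f x} ≤
      ∑ x, f x := by
  have htotal : ∑ x, ∑ k ∈ range (Fintype.card ι + 1), sphereAvg k f x =
      (Fintype.card ι + 1) * ∑ x, f x := by
    rw [sum_comm, sum_congr rfl fun k hk => sum_sphereAvg (mem_range_succ_iff.1 hk) f]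
    simp
  have hchebyshev := mul_card_lt_le_sum
    (g := fun x => ∑ k ∈ range (Fintype.card ι + 1), sphereAvg k f x)
    (fun x => sum_nonneg fun k _ => sphereAvg_nonneg hf k x) (c * (Fintype.card ι + 1))
  rw [htotal] at hchebyshev
  refine le_of_mul_le_mul_left ?_ (by positivity : (0 : ℝ) < Fintype.card ι + 1)
  linarith

theorem lt_sum_pow_or_lt_sum_of_lt_sum_sphereAvg [Nonempty ι] [Nontrivial A]
    {f : (ι → A) → ℝ} (hf : 0 ≤ f) {c : ℝ} (hc : 0 ≤ c) {x : ι → A} {r : ℕ}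
    (hr : r ≤ Fintype.card ι) (hlt : c * (r + 1) < ∑ k ∈ range (r + 1), sphereAvg k f x) :
    (∃ n ≤ 4 * Fintype.card ι, c / 16 * n < ∑ i ∈ range n, (sphereAvg 1 ^ i) f x) ∨
      c / 16 * (Fintype.card ι + 1) < ∑ k ∈ range (Fintype.card ι + 1), sphereAvg k f x := by
  rcases r.eq_zero_or_pos with rfl | hr0
  · refine .inl ⟨1, by have := Fintype.card_pos (α := ι); lia, ?_⟩
    simp only [Nat.cast_zero, zero_add, mul_one, range_one, sum_singleton, sphereAvg_zero] at hlt
    simp only [Nat.cast_one, mul_one, range_one, sum_singleton, pow_zero, Module.End.one_apply]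
    linarith
  rcases lt_or_ge (Fintype.card ι) (16 * r) with hlarge | hsmall
  · have hcard : (Fintype.card ι + 1 : ℝ) ≤ 16 * (r + 1) := by
      exact_mod_cast (by lia : Fintype.card ι + 1 ≤ 16 * (r + 1))
    refine .inr ?_
    calc c / 16 * (Fintype.card ι + 1) ≤ c / 16 * (16 * (r + 1)) := by gcongr
      _ = c * (r + 1) := by ring
      _ < ∑ k ∈ range (r + 1), sphereAvg k f x := hlt
      _ ≤ ∑ k ∈ range (Fintype.card ι + 1), sphereAvg k f x :=
        sum_le_sum_of_subset_of_nonneg (range_mono (by lia))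
          fun k _ _ => sphereAvg_nonneg hf k x
  · refine .inl ⟨4 * r, by lia, ?_⟩
    have hcompare := sum_range_le_sum_radialWalk_pow (invCardNonzero_nonneg A)
      (invCardNonzero_le_one A) hr0 hsmall
      fun k => sphereAvg_nonneg hf k x
    simp only [← sphereAvg_one_pow_sphereAvg f x _ (Nat.zero_le _), sphereAvg_zero] at hcompare
    push_cast
    linarith

theorem mul_card_lt_sum_sphereAvg_le [Nonempty ι] [Nontrivial A] {f : (ι → A) → ℝ} (hf : 0 ≤ f)
    {c : ℝ} (hc : 0 ≤ c) :
    c * #{x | ∃ r ≤ Fintype.card ι, c * (r + 1) < ∑ k ∈ range (r + 1), sphereAvg k f x} ≤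
      32 * ∑ x, f x := by
  have hone : 1 ≤ Fintype.card ι := Fintype.card_pos
  have hergodic := mul_card_lt_ergodicSum_le (sphereAvg_mono 1) (fun u => sum_sphereAvg hone u)
    (sphereAvg_one hone) hf (by positivity : 0 ≤ c / 16) (4 * Fintype.card ι)
  have hfull := mul_card_lt_sum_range_card_sphereAvg_le hf (c / 16)
  set S := univ.filter fun x : ι → A =>
    ∃ n ≤ 4 * Fintype.card ι, c / 16 * n < ∑ i ∈ range n, (sphereAvg 1 ^ i) f x
  set T := univ.filter fun x : ι → A =>
    c / 16 * (Fintype.card ι + 1) < ∑ k ∈ range (Fintype.card ι + 1), sphereAvg k f x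
  have hsub : univ.filter (fun x : ι → A =>
      ∃ r ≤ Fintype.card ι, c * (r + 1) < ∑ k ∈ range (r + 1), sphereAvg k f x) ⊆ S ∪ T := by
    simp only [S, T, ← filter_or]
    exact monotone_filter_right _ fun x _ ⟨r, hr, hlt⟩ =>
      lt_sum_pow_or_lt_sum_of_lt_sum_sphereAvg hf hc hr hlt
  have hcard := Nat.cast_le (α := ℝ).2 ((card_le_card hsub).trans (card_union_le S T))
  push_cast at hcard
  nlinarith

/-- The size of the Cesàro means below which `norm_le_of_sum_le_of_diffEnergy_le`, applied at
scale `w⁻¹`, contributes at most `τ / 2`. -/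
def cesaroThreshold (P : ℕ) (τ w : ℝ) : ℝ := τ / (2 ^ (P + 6) * (P + 1) * w)

/-- The size of the root of the difference energy below which
`norm_le_of_sum_le_of_diffEnergy_le`, applied at scale `w⁻¹`, contributes at most `τ / 2`. -/
def energyThreshold (P : ℕ) (τ w : ℝ) : ℝ := τ * w ^ P / 2 ^ (P + 2)

theorem lt_sum_or_lt_diffEnergy_of_lt_norm {E : Type*} [SeminormedAddCommGroup E] [NormedSpace ℝ E]
    {P N r : ℕ} {F : ℕ → E} {τ w : ℝ} (hτ : 0 ≤ τ) (hw : 1 ≤ w) (hr : r ≤ N) (hlt : τ < ‖F r‖) :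
    cesaroThreshold P τ w * (r + 1) < ∑ k ∈ range (r + 1), ‖F k‖ ∨
      energyThreshold P τ w ^ 2 < diffEnergy P N F := by
  by_contra! ⟨hsum, henergy⟩
  have hw0 : 0 < w := by linarith
  have hle := norm_le_of_sum_le_of_diffEnergy_le (inv_pos.2 hw0) (inv_le_one_of_one_le₀ hw)
    (by unfold cesaroThreshold; positivity) (by unfold energyThreshold; positivity) hr hsum henergy
  refine hlt.not_ge (hle.trans_eq ?_)
  rw [cesaroThreshold, energyThreshold, inv_pow]
  field_simp
  ring

theorem mul_card_energyThreshold_lt_le {α E : Type*} [Fintype α] [SeminormedAddCommGroup E]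
    {P N : ℕ} {F : α → ℕ → E} {C : ℝ} {g : α → ℝ} {τ w : ℝ} (hC : 0 ≤ C) (hτ : 0 < τ) (hw : 0 < w)
    (hg : 0 ≤ g) (hgw : ∀ x, g x ≤ τ * w ^ (2 * P))
    (henergy : ∑ x, diffEnergy P N (F x) ≤ C * ∑ x, g x ^ 2) :
    τ * #{x | energyThreshold P τ w ^ 2 < diffEnergy P N (F x)} ≤
      2 ^ (2 * P + 4) * C * ∑ x, g x := by
  have hchebyshev := mul_card_lt_le_sum (g := fun x => diffEnergy P N (F x))
    (fun x => sum_nonneg fun _ _ => by positivity) (energyThreshold P τ w ^ 2)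
  set S := univ.filter fun x => energyThreshold P τ w ^ 2 < diffEnergy P N (F x)
  have hsq : ∑ x, g x ^ 2 ≤ τ * w ^ (2 * P) * ∑ x, g x := by
    rw [mul_sum]
    gcongr with x
    rw [sq]
    exact mul_le_mul_of_nonneg_right (hgw x) (hg x)
  have hthreshold : energyThreshold P τ w ^ 2 = τ * w ^ (2 * P) / 2 ^ (2 * P + 4) * τ := by
    rw [energyThreshold]
    ring
  refine le_of_mul_le_mul_left ?_ (by positivity : 0 < τ * w ^ (2 * P) / 2 ^ (2 * P + 4))
  calc τ * w ^ (2 * P) / 2 ^ (2 * P + 4) * (τ * #S) = energyThreshold P τ w ^ 2 * #S := by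
        rw [hthreshold, mul_assoc]
    _ ≤ C * (τ * w ^ (2 * P) * ∑ x, g x) := by
        exact hchebyshev.trans (henergy.trans (by gcongr))
    _ = _ := by field_simp

universe u v

/-- Up to the factor `w`, which may be taken to be an arbitrarily small power of `sup g / τ`, this
is a weak type (1, 1) inequality for the maximal function. -/
theorem exists_mul_card_lt_sphereAvg_le (P : ℕ) : ∃ C : ℝ, 0 < C ∧
    ∀ (ι : Type u) (A : Type v) [Fintype ι] [DecidableEq ι] [Nonempty ι] [AddCommGroup A]
      [Fintype A] [DecidableEq A], 3 ≤ Fintype.card A → ∀ (g : (ι → A) → ℝ) (τ w : ℝ),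
      0 ≤ g → 0 < τ → 1 ≤ w → (∀ x, g x ≤ τ * w ^ (2 * P)) →
      τ * #{x | ∃ r ≤ Fintype.card ι, τ < sphereAvg r g x} ≤ C * w * ∑ x, g x := by
  obtain ⟨C, hC, henergy⟩ := exists_sum_diffEnergy_sphereAvg_real_le.{u, v} P
  refine ⟨2 ^ (P + 11) * (P + 1) + 2 ^ (2 * P + 4) * C, by positivity, ?_⟩
  intro ι A _ _ _ _ _ _ hA g τ w hg hτ hw hgw
  have : Nontrivial A := Fintype.one_lt_card_iff_nontrivial.1 (by lia)
  have hsum_nonneg : 0 ≤ ∑ x, g x := sum_nonneg fun x _ => hg x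
  have hcesaro := mul_card_lt_sum_sphereAvg_le hg
    (by unfold cesaroThreshold; positivity : 0 ≤ cesaroThreshold P τ w)
  have hroughness := mul_card_energyThreshold_lt_le hC.le hτ (by linarith) hg hgw (henergy ι A hA g)
  set S := univ.filter fun x : ι → A => ∃ r ≤ Fintype.card ι,
    cesaroThreshold P τ w * (r + 1) < ∑ k ∈ range (r + 1), sphereAvg k g x
  set T := univ.filter fun x : ι → A =>
    energyThreshold P τ w ^ 2 < diffEnergy P (Fintype.card ι) fun r => sphereAvg r g x
  have hsub : univ.filter (fun x : ι → A => ∃ r ≤ Fintype.card ι, τ < sphereAvg r g x) ⊆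
      S ∪ T := by
    simp only [S, T, ← filter_or]
    refine monotone_filter_right _ fun x _ ⟨r, hr, hlt⟩ => ?_
    have habs (k : ℕ) : ‖sphereAvg k g x‖ = sphereAvg k g x :=
      Real.norm_of_nonneg (sphereAvg_nonneg hg k x)
    have := lt_sum_or_lt_diffEnergy_of_lt_norm (P := P) (F := fun k => sphereAvg k g x) hτ.le hw hr
      (by rwa [habs])
    simp only [habs] at this
    exact this.imp_left fun h => ⟨r, hr, h⟩
  have hS : τ * #S ≤ 2 ^ (P + 11) * (P + 1) * w * ∑ x, g x := by
    rw [cesaroThreshold, div_mul_eq_mul_div, div_le_iff₀ (by positivity)] at hcesaro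
    exact hcesaro.trans_eq (by ring)
  have hT : τ * #T ≤ 2 ^ (2 * P + 4) * C * w * ∑ x, g x :=
    hroughness.trans <|
      mul_le_mul_of_nonneg_right (le_mul_of_one_le_right (by positivity) hw) hsum_nonneg
  calc _ ≤ τ * ((#S : ℝ) + #T) := by
        gcongr
        exact_mod_cast (card_le_card hsub).trans (card_union_le S T)
    _ ≤ _ := by linarith

end WeakType

section RestrictedWeakType

universe u v

theorem sum_le_mul_card_pos {α : Type*} [Fintype α] {g : α → ℝ} {B : ℝ} (hg : 0 ≤ g)
    (hB : ∀ x, g x ≤ B) : ∑ x, g x ≤ B * #{x | 0 < g x} := by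
  rw [← sum_filter_of_ne fun x _ hx => (hg x).lt_of_ne' hx, mul_comm, ← nsmul_eq_mul]
  exact sum_le_card_nsmul _ _ _ fun x _ => hB x

theorem exists_card_lt_sphereAvg_le {q : ℝ} (hq : 1 < q) : ∃ C : ℝ, 0 < C ∧
    ∀ (ι : Type u) (A : Type v) [Fintype ι] [DecidableEq ι] [Nonempty ι] [AddCommGroup A]
      [Fintype A] [DecidableEq A], 3 ≤ Fintype.card A → ∀ (g : (ι → A) → ℝ) (τ b : ℝ),
      0 ≤ g → 0 < τ → 1 ≤ b → (∀ x, g x ≤ τ * b) →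
      (#{x | ∃ r ≤ Fintype.card ι, τ < sphereAvg r g x} : ℝ) ≤ C * b ^ q * #{x | 0 < g x} := by
  obtain ⟨P, hP⟩ := exists_nat_ge (1 / (q - 1))
  have hqP : 1 ≤ (q - 1) * (2 * P : ℕ) := by
    rw [div_le_iff₀ (by linarith)] at hP
    push_cast
    linarith
  obtain ⟨C, hC, hweak⟩ := exists_mul_card_lt_sphereAvg_le.{u, v} P
  refine ⟨C, hC, fun ι A _ _ _ _ _ _ hA g τ b hg hτ hb hgb => ?_⟩
  have hb0 : 0 < b := by linarith
  have hpow : b ≤ (b ^ (q - 1)) ^ (2 * P) := by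
    rw [← Real.rpow_mul_natCast hb0.le]
    exact Real.self_le_rpow_of_one_le hb hqP
  have hτb : τ * b ≤ τ * (b ^ (q - 1)) ^ (2 * P) := by gcongr
  refine le_of_mul_le_mul_left ?_ hτ
  calc τ * (#{x | ∃ r ≤ Fintype.card ι, τ < sphereAvg r g x} : ℝ)
      ≤ C * b ^ (q - 1) * ∑ x, g x :=
        hweak ι A hA g τ _ hg hτ (Real.one_le_rpow hb (by linarith)) fun x => (hgb x).trans hτb
    _ ≤ C * b ^ (q - 1) * (τ * b * #{x | 0 < g x}) := by
        gcongr
        exact sum_le_mul_card_pos hg hgb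
    _ = τ * (C * b ^ q * #{x | 0 < g x}) := by
        rw [Real.rpow_sub_one hb0.ne']
        field_simp

end RestrictedWeakType

section Interpolation

variable {α : Type*} {f : α → ℝ} {lam : ℝ}

/-- The part of `f` taking values in the dyadic interval `(2 ^ l * lam / 2, 2 ^ l * lam]`. -/
def dyadicPiece (f : α → ℝ) (lam : ℝ) (l : ℕ) : α → ℝ :=
  {x | 2 ^ l * lam < 2 * f x ∧ f x ≤ 2 ^ l * lam}.indicator f

theorem dyadicPiece_nonneg (hf : 0 ≤ f) (l : ℕ) : 0 ≤ dyadicPiece f lam l :=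
  fun x => Set.indicator_nonneg (fun x _ => hf x) x

theorem dyadicPiece_le (hlam : 0 ≤ lam) (l : ℕ) (x : α) : dyadicPiece f lam l x ≤ 2 ^ l * lam :=
  Set.indicator_apply_le' (fun hx => hx.2) fun _ => by positivity

theorem lt_of_dyadicPiece_pos {l : ℕ} {x : α} (hx : 0 < dyadicPiece f lam l x) :
    2 ^ l * lam < 2 * f x :=
  (Set.mem_of_indicator_ne_zero hx.ne').1

theorem indicator_add_sum_dyadicPiece (hlam : 0 ≤ lam) (f : α → ℝ) (L : ℕ) :
    {x | 2 * f x ≤ lam}.indicator f + ∑ l ∈ range L, dyadicPiece f lam l =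
      {x | 2 * f x ≤ 2 ^ L * lam}.indicator f := by
  induction L with
  | zero => simp
  | succ L ih =>
    have hpow : 0 ≤ 2 ^ L * lam := by positivity
    rw [sum_range_succ, ← add_assoc, ih]
    funext x
    simp only [Pi.add_apply, dyadicPiece, Set.indicator_apply, Set.mem_ofPred_eq, pow_succ]
    split_ifs <;> grind

variable {N : ℕ} {T : ℕ → (α → ℝ) →ₗ[ℝ] (α → ℝ)} {a : ℝ}

theorem apply_le_of_forall_le {S : (α → ℝ) →ₗ[ℝ] (α → ℝ)} (hmono : Monotone S) (hone : S 1 = 1)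
    {g : α → ℝ} {c : ℝ} (hg : ∀ x, g x ≤ c) (x : α) : S g x ≤ c := by
  have hle : g ≤ c • 1 := fun y => by simpa using hg y
  simpa [hone] using hmono hle x

theorem exists_lt_dyadicPiece_of_lt (ha : 0 < a) (ha1 : a < 1) (hlam : 0 < lam) {L : ℕ}
    (hL : ∀ x, 2 * f x ≤ 2 ^ L * lam) {S : (α → ℝ) →ₗ[ℝ] (α → ℝ)} (hmono : Monotone S)
    (hone : S 1 = 1) {x : α} (hx : lam < S f x) :
    ∃ l < L, (1 - a) / 2 * a ^ l * lam < S (dyadicPiece f lam l) x := by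
  by_contra! hsmall
  have hbase : S ({x | 2 * f x ≤ lam}.indicator f) x ≤ lam / 2 := by
    refine apply_le_of_forall_le hmono hone (fun y => Set.indicator_apply_le' ?_ ?_) x
    · intro (hy : 2 * f y ≤ lam)
      linarith
    · intro
      positivity
  have hgeom : ∑ l ∈ range L, a ^ l ≤ (1 - a)⁻¹ := by
    rw [← tsum_geometric_of_lt_one ha.le ha1]
    exact (summable_geometric_of_lt_one ha.le ha1).sum_le_tsum _ fun l _ => by positivity
  have hf : f = {x | 2 * f x ≤ lam}.indicator f + ∑ l ∈ range L, dyadicPiece f lam l := by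
    rw [indicator_add_sum_dyadicPiece hlam.le]
    exact (Set.indicator_eq_self.2 fun x _ => hL x).symm
  refine hx.not_ge ?_
  calc S f x = S ({x | 2 * f x ≤ lam}.indicator f) x +
        ∑ l ∈ range L, S (dyadicPiece f lam l) x := by
        conv_lhs => rw [hf]
        rw [map_add, map_sum, Pi.add_apply, Finset.sum_apply]
    _ ≤ lam / 2 + ∑ l ∈ range L, (1 - a) / 2 * a ^ l * lam :=
        add_le_add hbase (sum_le_sum fun l hl => hsmall l (mem_range.1 hl))
    _ = lam / 2 + (1 - a) / 2 * lam * ∑ l ∈ range L, a ^ l := by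
        rw [mul_sum]
        exact congrArg _ (sum_congr rfl fun l _ => by ring)
    _ ≤ lam / 2 + (1 - a) / 2 * lam * (1 - a)⁻¹ := by
        have : 0 ≤ 1 - a := by linarith
        gcongr
    _ = lam := by
        have : 1 - a ≠ 0 := by linarith
        field_simp
        ring

variable [Fintype α]

theorem card_lt_le_sum_card_dyadic {C q : ℝ} (hC : 0 ≤ C) (hmono : ∀ r, Monotone (T r))
    (hone : ∀ r ≤ N, T r 1 = 1)
    (hweak : ∀ (g : α → ℝ) (τ b : ℝ), 0 ≤ g → 0 < τ → 1 ≤ b → (∀ x, g x ≤ τ * b) →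
      (#{x | ∃ r ≤ N, τ < T r g x} : ℝ) ≤ C * b ^ q * #{x | 0 < g x})
    (hf : 0 ≤ f) (ha : 0 < a) (ha1 : a < 1) (hlam : 0 < lam) {L : ℕ}
    (hL : ∀ x, 2 * f x ≤ 2 ^ L * lam) :
    (#{x | ∃ r ≤ N, lam < T r f x} : ℝ) ≤
      C * (2 / (1 - a)) ^ q *
        ∑ l ∈ range L, ((2 / a) ^ q) ^ l * #{x | 2 ^ l * lam < 2 * f x} := by
  classical
  have ha' : 0 < 1 - a := by linarith
  have hpiece (l : ℕ) :
      (#{x | ∃ r ≤ N, (1 - a) / 2 * a ^ l * lam < T r (dyadicPiece f lam l) x} : ℝ) ≤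
        C * (2 / (1 - a)) ^ q * (((2 / a) ^ q) ^ l * #{x | 2 ^ l * lam < 2 * f x}) := by
    have hratio : (1 - a) / 2 * a ^ l * lam * (2 / (1 - a) * (2 / a) ^ l) = 2 ^ l * lam := by
      rw [div_pow]
      field_simp
    have hratio1 : 1 ≤ 2 / (1 - a) * (2 / a) ^ l :=
      one_le_mul_of_one_le_of_one_le ((one_le_div ha').2 (by linarith))
        (one_le_pow₀ ((one_le_div ha).2 (by linarith)))
    refine (hweak _ _ _ (dyadicPiece_nonneg hf l) (by positivity) hratio1 fun x => ?_).trans ?_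
    · rw [hratio]
      exact dyadicPiece_le hlam.le l x
    · rw [Real.mul_rpow (by positivity) (by positivity), ← Real.rpow_pow_comm (by positivity),
        ← mul_assoc, mul_assoc (C * _)]
      have hcard : #{x | 0 < dyadicPiece f lam l x} ≤ #{x | 2 ^ l * lam < 2 * f x} :=
        card_le_card (monotone_filter_right _ fun x _ => lt_of_dyadicPiece_pos)
      gcongr
  have hsub : univ.filter (fun x => ∃ r ≤ N, lam < T r f x) ⊆ (range L).biUnion fun l =>
      univ.filter fun x => ∃ r ≤ N, (1 - a) / 2 * a ^ l * lam < T r (dyadicPiece f lam l) x := by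
    intro x hx
    obtain ⟨r, hr, hx⟩ := (mem_filter.1 hx).2
    obtain ⟨l, hl, hlt⟩ := exists_lt_dyadicPiece_of_lt ha ha1 hlam hL (hmono r) (hone r hr) hx
    exact mem_biUnion.2 ⟨l, mem_range.2 hl, mem_filter.2 ⟨mem_univ x, r, hr, hlt⟩⟩
  rw [mul_sum]
  refine le_trans ?_ (sum_le_sum fun l _ => hpiece l)
  exact_mod_cast (card_le_card hsub).trans card_biUnion_le

end Interpolation

section LayerCake

open MeasureTheory ENNReal

theorem lintegral_rpow_le_tsum_of_meas_lt_le {α κ : Type*} [MeasurableSpace α] [Countable κ]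
    {μ : Measure α} {F : α → ℝ} {G : κ → α → ℝ} {c : κ → ℝ≥0∞} {p : ℝ} (hp : 0 < p) (hF : 0 ≤ F)
    (hG : ∀ l, 0 ≤ G l) (hFm : AEMeasurable F μ) (hGm : ∀ l, AEMeasurable (G l) μ)
    (h : ∀ t > 0, μ {x | t < F x} ≤ ∑' l, c l * μ {x | t < G l x}) :
    ∫⁻ x, .ofReal (F x ^ p) ∂μ ≤ ∑' l, c l * ∫⁻ x, .ofReal (G l x ^ p) ∂μ := by
  have hmeas (l : κ) : Measurable fun t : ℝ => μ {x | t < G l x} * .ofReal (t ^ (p - 1)) := by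
    refine Measurable.mul (Antitone.measurable fun s t hst => ?_) (by fun_prop)
    exact measure_mono fun x hx => hst.trans_lt hx
  simp_rw [fun l => lintegral_rpow_eq_lintegral_meas_lt_mul μ (.of_forall (hG l)) (hGm l) hp]
  calc ∫⁻ x, .ofReal (F x ^ p) ∂μ
      = .ofReal p * ∫⁻ t in Set.Ioi 0, μ {x | t < F x} * .ofReal (t ^ (p - 1)) :=
        lintegral_rpow_eq_lintegral_meas_lt_mul μ (.of_forall hF) hFm hp
    _ ≤ .ofReal p * ∫⁻ t in Set.Ioi 0,
          ∑' l, c l * (μ {x | t < G l x} * .ofReal (t ^ (p - 1))) := by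
        refine mul_le_mul_right (setLIntegral_mono' measurableSet_Ioi fun t ht => ?_) _
        simp_rw [← mul_assoc, ENNReal.tsum_mul_right]
        gcongr
        exact h t ht
    _ = _ := by
        rw [lintegral_tsum fun l => ((hmeas l).const_mul _).aemeasurable, ← ENNReal.tsum_mul_left]
        refine tsum_congr fun l => ?_
        rw [lintegral_const_mul _ (hmeas l), mul_left_comm]

variable {α : Type*} [Fintype α]

theorem ofReal_sum_rpow_le_tsum_of_card_lt_le {κ : Type*} [Countable κ] {F : α → ℝ}
    {G : κ → α → ℝ} {c : κ → ℝ≥0∞} {p : ℝ} (hp : 0 < p) (hF : 0 ≤ F) (hG : ∀ l, 0 ≤ G l)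
    (h : ∀ t > 0, (#{x | t < F x} : ℝ≥0∞) ≤ ∑' l, c l * #{x | t < G l x}) :
    ENNReal.ofReal (∑ x, F x ^ p) ≤ ∑' l, c l * .ofReal (∑ x, G l x ^ p) := by
  let _ : MeasurableSpace α := ⊤
  have : MeasurableSingletonClass α := ⟨fun _ => trivial⟩
  have hsum {g : α → ℝ} (hg : 0 ≤ g) :
      ∫⁻ x, .ofReal (g x ^ p) ∂Measure.count = ENNReal.ofReal (∑ x, g x ^ p) := by
    rw [lintegral_fintype, ofReal_sum_of_nonneg fun x _ => Real.rpow_nonneg (hg x) p]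
    simp
  have hcount (g : α → ℝ) (t : ℝ) : Measure.count {x | t < g x} = (#{x | t < g x} : ℝ≥0∞) := by
    rw [← Measure.count_apply_finset, coe_filter_univ]
  simp_rw [← hsum hF, ← fun l => hsum (hG l)]
  refine lintegral_rpow_le_tsum_of_meas_lt_le hp hF hG measurable_from_top.aemeasurable
    (fun l => measurable_from_top.aemeasurable) fun t ht => ?_
  simpa only [hcount] using h t ht

theorem sum_rpow_le_tsum_of_card_lt_le_sum {F : α → ℝ} {G : ℕ → α → ℝ} {c : ℕ → ℝ} {p : ℝ}
    (hp : 0 < p) (hF : 0 ≤ F) (hG : ∀ l, 0 ≤ G l) (hc : 0 ≤ c)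
    (h : ∀ t > 0, ∃ L : ℕ, (#{x | t < F x} : ℝ) ≤ ∑ l ∈ range L, c l * #{x | t < G l x})
    (hsummable : Summable fun l => c l * ∑ x, G l x ^ p) :
    ∑ x, F x ^ p ≤ ∑' l, c l * ∑ x, G l x ^ p := by
  have hG_nonneg (l : ℕ) : 0 ≤ ∑ x, G l x ^ p := sum_nonneg fun x _ => Real.rpow_nonneg (hG l x) p
  have hterm_nonneg (l : ℕ) : 0 ≤ c l * ∑ x, G l x ^ p := mul_nonneg (hc l) (hG_nonneg l)
  rw [← ofReal_le_ofReal_iff (tsum_nonneg hterm_nonneg),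
    ENNReal.ofReal_tsum_of_nonneg hterm_nonneg hsummable]
  simp_rw [fun l => ofReal_mul (q := ∑ x, G l x ^ p) (hc l)]
  refine ofReal_sum_rpow_le_tsum_of_card_lt_le hp hF hG fun t ht => ?_
  obtain ⟨L, hL⟩ := h t ht
  refine le_trans ?_ (ENNReal.sum_le_tsum (range L))
  simp_rw [← ofReal_natCast, ← fun l => ofReal_mul (q := (#{x | t < G l x} : ℝ)) (hc l)]
  rw [← ofReal_sum_of_nonneg fun l _ => mul_nonneg (hc l) (Nat.cast_nonneg _)]
  exact ofReal_le_ofReal hL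

theorem sum_rpow_le_of_card_lt_le_sum_dyadic {F f : α → ℝ} {p C b : ℝ} (hp : 0 < p) (hF : 0 ≤ F)
    (hf : 0 ≤ f) (hC : 0 ≤ C) (hb : 0 ≤ b) (hbp : b < 2 ^ p)
    (h : ∀ t > 0, ∃ L : ℕ, (#{x | t < F x} : ℝ) ≤
      C * ∑ l ∈ range L, b ^ l * #{x | 2 ^ l * t < 2 * f x}) :
    ∑ x, F x ^ p ≤ C * 2 ^ p * (1 - b / 2 ^ p)⁻¹ * ∑ x, f x ^ p := by
  have hscale (l : ℕ) : C * b ^ l * ∑ x, (2 * f x / 2 ^ l) ^ p =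
      C * 2 ^ p * (∑ x, f x ^ p) * (b / 2 ^ p) ^ l := by
    have hrpow (x : α) : (2 * f x / 2 ^ l) ^ p = 2 ^ p / (2 ^ p) ^ l * f x ^ p := by
      rw [Real.div_rpow (mul_nonneg two_pos.le (hf x)) (by positivity),
        Real.mul_rpow two_pos.le (hf x), Real.rpow_pow_comm two_pos.le, div_mul_eq_mul_div]
    simp_rw [hrpow, ← mul_sum, div_pow]
    ring
  have hlevel : ∀ t > 0, ∃ L : ℕ, (#{x | t < F x} : ℝ) ≤
      ∑ l ∈ range L, C * b ^ l * #{x | t < 2 * f x / 2 ^ l} := by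
    simp_rw [lt_div_iff₀ (pow_pos (two_pos (α := ℝ)) _), mul_comm _ ((2 : ℝ) ^ _), mul_assoc,
      ← mul_sum]
    exact h
  have hratio : b / 2 ^ p < 1 := (div_lt_one (by positivity)).2 hbp
  have hgeom := hasSum_geometric_of_lt_one (by positivity) hratio
    |>.mul_left (C * 2 ^ p * ∑ x, f x ^ p)
  have hbound := sum_rpow_le_tsum_of_card_lt_le_sum hp hF
    (fun l x => div_nonneg (mul_nonneg two_pos.le (hf x)) (by positivity))
    (fun l => mul_nonneg hC (pow_nonneg hb l)) hlevel (by simpa only [hscale] using hgeom.summable)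
  simp only [hscale, hgeom.tsum_eq] at hbound
  linarith

end LayerCake

section SphericalMaximal

universe u v w

theorem exists_two_div_rpow_lt {p q : ℝ} (hq : 0 < q) (hqp : q < p) :
    ∃ a : ℝ, 0 < a ∧ a < 1 ∧ (2 / a) ^ q < 2 ^ p := by
  obtain ⟨s, hs1, hsp⟩ := exists_between ((one_lt_div hq).2 hqp)
  refine ⟨2 ^ (1 - s), by positivity,
    Real.rpow_lt_one_of_one_lt_of_neg one_lt_two (by linarith), ?_⟩
  rw [Real.rpow_sub two_pos, Real.rpow_one, div_div_cancel₀ two_ne_zero, ← Real.rpow_mul two_pos.le]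
  exact Real.rpow_lt_rpow_of_exponent_lt one_lt_two ((lt_div_iff₀ hq).1 hsp)

theorem exists_forall_two_mul_le_two_pow_mul {α : Type*} [Finite α] (f : α → ℝ) {t : ℝ}
    (ht : 0 < t) : ∃ L : ℕ, ∀ x, 2 * f x ≤ 2 ^ L * t := by
  obtain ⟨B, hB⟩ := (Set.finite_range f).bddAbove
  obtain ⟨L, hL⟩ := pow_unbounded_of_one_lt (2 * B / t) one_lt_two
  refine ⟨L, fun x => ?_⟩
  linarith [hB (Set.mem_range_self x), (div_lt_iff₀ ht).1 hL]

variable {ι A E : Type*} [Fintype ι] [DecidableEq ι] [AddCommGroup A] [Fintype A]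
  [DecidableEq A] [SeminormedAddCommGroup E] [NormedSpace ℝ E]

/-- The maximal function of the averages over Hamming spheres of all radii `r ≤ card ι`. -/
def sphericalMaximal (f : (ι → A) → E) (x : ι → A) : ℝ :=
  (range (Fintype.card ι + 1)).sup' nonempty_range_add_one fun r => ‖sphereAvg r f x‖

theorem sphericalMaximal_nonneg (f : (ι → A) → E) : 0 ≤ sphericalMaximal f := fun x =>
  (norm_nonneg _).trans
    (le_sup' (fun r => ‖sphereAvg r f x‖) (mem_range.2 (Fintype.card ι).succ_pos))

theorem exists_lt_sphereAvg_of_lt_sphericalMaximal {f : (ι → A) → E} {t : ℝ} {x : ι → A}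
    (ht : t < sphericalMaximal f x) :
    ∃ r ≤ Fintype.card ι, t < sphereAvg r (fun z => ‖f z‖) x := by
  obtain ⟨r, hr, hlt⟩ := (lt_sup'_iff _).1 ht
  exact ⟨r, mem_range_succ_iff.1 hr, hlt.trans_le (norm_sphereAvg_le r f x)⟩

theorem exists_sum_sphericalMaximal_rpow_le {p : ℝ} (hp : 1 < p) : ∃ C : ℝ, 0 < C ∧
    ∀ (ι : Type u) (A : Type v) (E : Type w) [Fintype ι] [DecidableEq ι] [Nonempty ι]
      [AddCommGroup A] [Fintype A] [DecidableEq A] [SeminormedAddCommGroup E] [NormedSpace ℝ E],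
      3 ≤ Fintype.card A → ∀ f : (ι → A) → E,
      ∑ x, sphericalMaximal f x ^ p ≤ C * ∑ x, ‖f x‖ ^ p := by
  obtain ⟨q, hq, hqp⟩ := exists_between hp
  obtain ⟨a, ha, ha1, hap⟩ := exists_two_div_rpow_lt (by linarith) hqp
  obtain ⟨C, hC, hweak⟩ := exists_card_lt_sphereAvg_le.{u, v} hq
  have : 0 < 1 - a := by linarith
  have hratio : 0 < 1 - (2 / a) ^ q / 2 ^ p := by
    rw [sub_pos, div_lt_one (by positivity)]
    exact hap
  refine ⟨C * (2 / (1 - a)) ^ q * 2 ^ p * (1 - (2 / a) ^ q / 2 ^ p)⁻¹, by positivity, ?_⟩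
  intro ι A E _ _ _ _ _ _ _ _ hA f
  have : Nontrivial A := Fintype.one_lt_card_iff_nontrivial.1 (by lia)
  refine sum_rpow_le_of_card_lt_le_sum_dyadic (by linarith) (sphericalMaximal_nonneg f)
    (fun x => norm_nonneg (f x)) (by positivity) (by positivity) hap fun t ht => ?_
  obtain ⟨L, hL⟩ := exists_forall_two_mul_le_two_pow_mul (fun x => ‖f x‖) ht
  refine ⟨L, le_trans ?_ (card_lt_le_sum_card_dyadic hC.le sphereAvg_mono
    (fun r hr => sphereAvg_one hr) (hweak ι A hA) (fun x => norm_nonneg (f x)) ha ha1 ht hL)⟩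
  exact_mod_cast card_le_card (monotone_filter_right _ fun x _ =>
    exists_lt_sphereAvg_of_lt_sphericalMaximal)

theorem statement0_general {p : ℝ} (hp : 1 < p) : ∃ C : ℝ, 0 < C ∧
    ∀ (ι : Type u) (A : Type v) (E : Type w) [Fintype ι] [DecidableEq ι] [Nonempty ι]
      [AddCommGroup A] [Fintype A] [DecidableEq A] [SeminormedAddCommGroup E] [NormedSpace ℝ E],
      3 ≤ Fintype.card A → ∀ f : (ι → A) → E,
      (∑ x, sphericalMaximal f x ^ p) ^ (1 / p) ≤ C * (∑ x, ‖f x‖ ^ p) ^ (1 / p) := by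
  obtain ⟨C, hC, hbound⟩ := exists_sum_sphericalMaximal_rpow_le.{u, v, w} hp
  refine ⟨C ^ (1 / p), by positivity, fun ι A E _ _ _ _ _ _ _ _ hA f => ?_⟩
  rw [← Real.mul_rpow hC.le (by positivity)]
  exact Real.rpow_le_rpow (sum_nonneg fun x _ => Real.rpow_nonneg (sphericalMaximal_nonneg f x) p)
    (hbound ι A E hA f) (by positivity)

end SphericalMaximal

section ZMod

variable {m N : ℕ} (f : (Fin N → ZMod (m + 1)) → ℂ)

theorem convC_sigmaC_eq_sphereAvg (r : ℕ) : convC (sigmaC m N r) f = sphereAvg r f := by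
  have hw_eq_hammingNorm (y : Fin N → ZMod (m + 1)) : hw y = hammingNorm y := rfl
  funext x
  simp only [convC, sigmaC, sphereAvg_apply, hammingSphere, hw_eq_hammingNorm, Nat.cast_inj,
    ite_mul, zero_mul, ← sum_filter, ← mul_sum, Complex.real_smul, Complex.ofReal_inv,
    Complex.ofReal_natCast]

theorem sphericalMax_eq_sphericalMaximal : sphericalMax m N f = sphericalMaximal f := by
  funext x
  simp only [sphericalMax, sphericalMaximal, convC_sigmaC_eq_sphereAvg, Fintype.card_fin]

end ZMod

theorem statement0 (m : ℕ) (hm : 2 ≤ m) (p : ℝ) (hp : 1 < p) :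
    ∃ C : ℝ, 0 < C ∧ ∀ N : ℕ, 1 ≤ N → ∀ f : (Fin N → ZMod (m + 1)) → ℂ,
      (∑ x, sphericalMax m N f x ^ p) ^ (1 / p) ≤ C * (∑ x, ‖f x‖ ^ p) ^ (1 / p) := by
  obtain ⟨C, hC, hbound⟩ := statement0_general.{0, 0, 0} hp
  refine ⟨C, hC, fun N hN f => ?_⟩
  have : Nonempty (Fin N) := ⟨⟨0, hN⟩⟩
  rw [sphericalMax_eq_sphericalMaximal]
  exact hbound (Fin N) (ZMod (m + 1)) ℂ (by rw [ZMod.card]; lia) f
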